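/- arXiv:2504.04952 — 9 statements merged into one kernel-verified Lean document; each statement's English description precedes it below -/
import Mathlib

section
/- Let n ≥ 2 and j ∈ {1,…,n−1}. If ζ ∈ T_j^n, then lim_{s→0⁺} s^{n−j} ∫_s^∞ ζ(t) dt = 0. (Here for every s > 0 the integral ∫_s^∞ ζ(t) dt is finite, since ζ is continuous with bounded support.) -/
open MeasureTheory Filter Set

/-- A function `ζ : (0,∞) → ℝ` (modeled as `ℝ → ℝ`, values on nonpositive reals irrelevant)
has bounded support. -/
def BddSupp (ζ : ℝ → ℝ) : Prop := ∃ R : ℝ, ∀ s, R ≤ s → ζ s = 0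

/-- `ζ ∈ T_j^n`: continuous on `(0,∞)` with bounded support and
`lim_{s → 0⁺} s^(n-j+1) ζ(s) = 0`. -/
def MemT (n j : ℕ) (ζ : ℝ → ℝ) : Prop :=
  ContinuousOn ζ (Set.Ioi 0) ∧ BddSupp ζ ∧
    Tendsto (fun s => s ^ (n - j + 1) * ζ s) (nhdsWithin 0 (Set.Ioi 0)) (nhds 0)

/-!
Near `0⁺` the hypothesis says `ζ = o(t ^ (-(n - j + 1)))`, and the tail integrals over `(s, ∞)` of
this power are `s ^ (-(n - j)) / (n - j)`, which diverge as `s → 0⁺` since `n - j > 0`. A little-o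
relation whose right-hand side has divergent tail integrals passes to the tail integrals: split
`(s, ∞)` at a fixed `u` below which `‖f‖ ≤ ε ‖g‖`; the part beyond `u` is a constant, hence
negligible.
-/

open Asymptotics Topology

section LittleO

variable {α E F : Type*} [LinearOrder α] [TopologicalSpace α] [OrderTopology α]
  [MeasurableSpace α] [OpensMeasurableSpace α] {μ : Measure α}
  [NormedAddCommGroup E] [NormedSpace ℝ E] [NormedAddCommGroup F] {f : α → E} {g : α → F}

theorem norm_setIntegral_Ioi_le_of_norm_le_on_Ioo {x u : α} {c : ℝ} (hxu : x < u) (hc : 0 ≤ c)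
    (hf : IntegrableOn f (Ioi x) μ) (hg : IntegrableOn g (Ioi x) μ)
    (hfg : ∀ t ∈ Ioo x u, ‖f t‖ ≤ c * ‖g t‖) :
    ‖∫ t in Ioi x, f t ∂μ‖ ≤ c * (∫ t in Ioi x, ‖g t‖ ∂μ) + ‖∫ t in Ici u, f t ∂μ‖ := by
  have split : ∫ t in Ioi x, f t ∂μ = (∫ t in Ioo x u, f t ∂μ) + ∫ t in Ici u, f t ∂μ := by
    rw [← Ioo_union_Ici_eq_Ioi hxu]
    exact setIntegral_union (disjoint_left.2 fun t ht htu ↦ ht.2.not_ge htu) measurableSet_Ici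
      (hf.mono_set Ioo_subset_Ioi_self) (hf.mono_set (Ici_subset_Ioi.2 hxu))
  have head : ‖∫ t in Ioo x u, f t ∂μ‖ ≤ c * ∫ t in Ioi x, ‖g t‖ ∂μ :=
    calc ‖∫ t in Ioo x u, f t ∂μ‖
        ≤ ∫ t in Ioo x u, c * ‖g t‖ ∂μ :=
          norm_integral_le_of_norm_le ((hg.mono_set Ioo_subset_Ioi_self).norm.const_mul c)
            (ae_restrict_of_forall_mem measurableSet_Ioo hfg)
      _ ≤ ∫ t in Ioi x, c * ‖g t‖ ∂μ :=
          setIntegral_mono_set (hg.norm.const_mul c) (ae_of_all _ fun t ↦ by positivity)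
            Ioo_subset_Ioi_self.eventuallyLE
      _ = c * ∫ t in Ioi x, ‖g t‖ ∂μ := integral_const_mul c _
  rw [split]
  exact (norm_add_le _ _).trans (by gcongr)

theorem isLittleO_setIntegral_Ioi [NoMaxOrder α] {a : α}
    (hf : ∀ x, a < x → IntegrableOn f (Ioi x) μ) (hg : ∀ x, a < x → IntegrableOn g (Ioi x) μ)
    (hfg : f =o[𝓝[>] a] g)
    (hg_top : Tendsto (fun x ↦ ∫ t in Ioi x, ‖g t‖ ∂μ) (𝓝[>] a) atTop) :
    (fun x ↦ ∫ t in Ioi x, f t ∂μ) =o[𝓝[>] a] fun x ↦ ∫ t in Ioi x, ‖g t‖ ∂μ := by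
  refine isLittleO_iff.2 fun ε hε ↦ ?_
  obtain ⟨u, hu, h_near⟩ :=
    mem_nhdsGT_iff_exists_Ioo_subset.1 (hfg.bound (half_pos hε))
  filter_upwards [Ioo_mem_nhdsGT hu,
    (hg_top.const_mul_atTop (half_pos hε)).eventually_ge_atTop ‖∫ t in Ici u, f t ∂μ‖]
    with x ⟨hax, hxu⟩ h_tail
  have h_split := norm_setIntegral_Ioi_le_of_norm_le_on_Ioo hxu (half_pos hε).le (hf x hax)
    (hg x hax) fun t ht ↦ h_near ⟨hax.trans ht.1, ht.2⟩
  rw [Real.norm_of_nonneg (integral_nonneg fun t ↦ norm_nonneg (g t))]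
  linarith

end LittleO

section Rpow

variable {E : Type*} [NormedAddCommGroup E] [NormedSpace ℝ E] {f : ℝ → E}

theorem tendsto_rpow_smul_nhds_zero_iff_isLittleO {p : ℝ} :
    Tendsto (fun s ↦ s ^ p • f s) (𝓝[>] 0) (𝓝 0) ↔ f =o[𝓝[>] 0] fun s ↦ s ^ (-p) := by
  rw [← isLittleO_norm_left, isLittleO_iff_tendsto', tendsto_zero_iff_norm_tendsto_zero]
  · refine tendsto_congr' ?_
    filter_upwards [self_mem_nhdsWithin] with s (hs : 0 < s)
    rw [norm_smul, Real.norm_of_nonneg (by positivity), Real.rpow_neg hs.le, div_inv_eq_mul,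
      mul_comm]
  · filter_upwards [self_mem_nhdsWithin] with s (hs : 0 < s) h_zero
    exact absurd h_zero (by positivity)

theorem isLittleO_setIntegral_Ioi_rpow {p : ℝ} (hp : p < -1)
    (hf : ∀ s, 0 < s → IntegrableOn f (Ioi s)) (hfp : f =o[𝓝[>] 0] fun t ↦ t ^ p) :
    (fun s ↦ ∫ t in Ioi s, f t) =o[𝓝[>] 0] fun s ↦ s ^ (p + 1) := by
  have h_tail : (fun s ↦ ∫ t in Ioi s, ‖t ^ p‖) =ᶠ[𝓝[>] 0] fun s ↦ (-(p + 1))⁻¹ * s ^ (p + 1) := by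
    filter_upwards [self_mem_nhdsWithin] with s (hs : 0 < s)
    calc ∫ t in Ioi s, ‖t ^ p‖ = ∫ t in Ioi s, t ^ p :=
          setIntegral_congr_fun measurableSet_Ioi fun t ht ↦
            Real.norm_of_nonneg (Real.rpow_nonneg (hs.trans ht).le p)
      _ = -s ^ (p + 1) / (p + 1) := integral_Ioi_rpow_of_lt hp hs
      _ = (-(p + 1))⁻¹ * s ^ (p + 1) := by rw [inv_neg]; ring
  have h_top : Tendsto (fun s : ℝ ↦ (-(p + 1))⁻¹ * s ^ (p + 1)) (𝓝[>] 0) atTop :=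
    (tendsto_rpow_neg_nhdsGT_zero (by linarith)).const_mul_atTop (inv_pos.2 (by linarith))
  exact (isLittleO_setIntegral_Ioi hf (fun s hs ↦ integrableOn_Ioi_rpow_of_lt hp hs) hfp
    (h_top.congr' h_tail.symm)).trans_isBigO
      (h_tail.isBigO.trans (isBigO_const_mul_self _ _ _))

theorem stmt0_general {a : ℝ} (ha : 0 < a) (hf : ∀ s, 0 < s → IntegrableOn f (Ioi s))
    (h_lim : Tendsto (fun s ↦ s ^ (a + 1) • f s) (𝓝[>] 0) (𝓝 0)) :
    Tendsto (fun s ↦ s ^ a • ∫ t in Ioi s, f t) (𝓝[>] 0) (𝓝 0) := by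
  rw [tendsto_rpow_smul_nhds_zero_iff_isLittleO] at h_lim ⊢
  simpa only [neg_add, neg_add_cancel_right] using
    isLittleO_setIntegral_Ioi_rpow (by linarith) hf h_lim

end Rpow

theorem BddSupp.integrableOn_Ici {ζ : ℝ → ℝ} {μ : Measure ℝ} {s : ℝ} (hζ : BddSupp ζ)
    (h_loc : LocallyIntegrableOn ζ (Ici s) μ) : IntegrableOn ζ (Ici s) μ := by
  have h_zero : ζ =ᶠ[atTop] fun _ ↦ (0 : ℝ) := eventually_atTop.2 hζ
  exact h_loc.integrableOn_of_isBigO_atTop h_zero.isBigO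
    ⟨univ, univ_mem, integrableOn_zero⟩

theorem MemT.integrableOn_Ioi {n j : ℕ} {ζ : ℝ → ℝ} {s : ℝ} (hζ : MemT n j ζ) (hs : 0 < s) :
    IntegrableOn ζ (Ioi s) :=
  have h_cont : ContinuousOn ζ (Ici s) := hζ.1.mono (Ici_subset_Ioi.2 hs)
  (hζ.2.1.integrableOn_Ici (h_cont.locallyIntegrableOn measurableSet_Ici)).mono_set
    Ioi_subset_Ici_self

theorem stmt0 (n j : ℕ) (hn : 2 ≤ n) (hj : 1 ≤ j) (hjn : j ≤ n - 1)
    (ζ : ℝ → ℝ) (hζ : MemT n j ζ) :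
    Tendsto (fun s => s ^ (n - j) * ∫ t in Set.Ioi s, ζ t)
      (nhdsWithin 0 (Set.Ioi 0)) (nhds 0) := by
  have h_exp : (0 : ℝ) < (n - j : ℕ) := Nat.cast_pos.2 (by lia)
  exact_mod_cast stmt0_general h_exp (fun s ↦ hζ.integrableOn_Ioi) (mod_cast hζ.2.2)
end

section
/- Let n ≥ 2 and j ∈ {1,…,n−1}. If ρ : (0,∞) → ℝ is continuous with bounded support and lim_{s→0⁺} s^{n−j} ρ(s) = 0 (that is, ρ ∈ T_j^{n−1}), then lim_{s→0⁺} s^{n−j+1} ∫_s^∞ ρ(t)/t² dt = 0. -/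
open MeasureTheory Filter Set

/-!
Put `a = n - j`. Near `0` we have `|ρ t / t ^ 2| ≤ ε * t ^ (-(a + 2))`, and since `a > -1` this
power integrates over `(s, ∞)` to `ε / (a + 1) * s ^ (-(a + 1))`. The part of the integral away
from `0` does not depend on `s`, so it is negligible against `s ^ (-(a + 1))`, which blows up as
`s → 0⁺`.
-/

open Asymptotics
open scoped Topology

section Asymptotics

variable {E : Type*} [NormedAddCommGroup E] [NormedSpace ℝ E] {f : ℝ → E} {a : ℝ}

theorem isLittleO_rpow_nhdsGT_zero_iff :
    f =o[𝓝[>] 0] (fun s => s ^ a) ↔ Tendsto (fun s => s ^ (-a) • f s) (𝓝[>] 0) (𝓝 0) := by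
  have rpow_cancel : ∀ᶠ s : ℝ in 𝓝[>] 0, s ^ (-a) * s ^ a = 1 := by
    filter_upwards [self_mem_nhdsWithin] with s hs
    rw [← Real.rpow_add hs, neg_add_cancel, Real.rpow_zero]
  rw [← isLittleO_one_iff ℝ]
  constructor
  · intro h
    exact ((isBigO_refl (fun s : ℝ => s ^ (-a)) _).smul_isLittleO h).congr' .rfl rpow_cancel
  · intro h
    refine ((isBigO_refl (fun s : ℝ => s ^ a) _).smul_isLittleO h).congr' ?_ (by simp)
    filter_upwards [rpow_cancel] with s hs
    rw [smul_smul, mul_comm, hs, one_smul]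

theorem norm_setIntegral_Ioc_le_of_norm_le_rpow {C s δ : ℝ} (ha : a < -1) (hs : 0 < s)
    (hC : 0 ≤ C) (hf : ∀ t ∈ Ioc s δ, ‖f t‖ ≤ C * t ^ a) :
    ‖∫ t in Ioc s δ, f t‖ ≤ C * (-s ^ (a + 1) / (a + 1)) := by
  have hint : IntegrableOn (fun t : ℝ => C * t ^ a) (Ioi s) :=
    (integrableOn_Ioi_rpow_of_lt ha hs).const_mul C
  have hnonneg : ∀ t ∈ Ioi s, 0 ≤ C * t ^ a := fun t ht =>
    mul_nonneg hC (Real.rpow_nonneg (hs.trans ht).le a)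
  calc ‖∫ t in Ioc s δ, f t‖
      ≤ ∫ t in Ioc s δ, C * t ^ a :=
        norm_integral_le_of_norm_le (hint.mono_set Ioc_subset_Ioi_self)
          (ae_restrict_of_forall_mem measurableSet_Ioc hf)
    _ ≤ ∫ t in Ioi s, C * t ^ a :=
        setIntegral_mono_set hint (ae_restrict_of_forall_mem measurableSet_Ioi hnonneg)
          Ioc_subset_Ioi_self.eventuallyLE
    _ = C * (-s ^ (a + 1) / (a + 1)) := by
        rw [integral_const_mul, integral_Ioi_rpow_of_lt ha hs]

theorem isLittleO_integral_Ioi_rpow (ha : a < -1) (hint : ∀ s, 0 < s → IntegrableOn f (Ioi s))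
    (hf : f =o[𝓝[>] 0] (fun s => s ^ a)) :
    (fun s => ∫ t in Ioi s, f t) =o[𝓝[>] 0] (fun s => s ^ (a + 1)) := by
  have ha' : a + 1 < 0 := by linarith
  refine IsLittleO.of_bound fun ε hε => ?_
  set c := ε / 2 * -(a + 1) with hc
  have hc0 : 0 < c := mul_pos (half_pos hε) (neg_pos.2 ha')
  obtain ⟨δ, hδ : 0 < δ, hfδ⟩ := mem_nhdsGT_iff_exists_Ioc_subset.1 (hf.bound hc0)
  have htail : (fun _ => ∫ t in Ioi δ, f t) =o[𝓝[>] 0] (fun s : ℝ => s ^ (a + 1)) :=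
    isLittleO_const_left.2 <| .inr <|
      tendsto_norm_atTop_atTop.comp (tendsto_rpow_neg_nhdsGT_zero ha')
  filter_upwards [htail.bound (half_pos hε), Ioc_mem_nhdsGT hδ] with s htail_s ⟨hs, hsδ⟩
  have hnear : ‖∫ t in Ioc s δ, f t‖ ≤ ε / 2 * ‖s ^ (a + 1)‖ := by
    refine (norm_setIntegral_Ioc_le_of_norm_le_rpow ha hs hc0.le fun t ht => ?_).trans_eq ?_
    · have ht0 : 0 < t := hs.trans ht.1
      simpa only [mem_ofPred_eq, Real.norm_of_nonneg (Real.rpow_nonneg ht0.le a)]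
        using hfδ ⟨ht0, ht.2⟩
    · rw [Real.norm_of_nonneg (Real.rpow_nonneg hs.le _), hc]
      have ha0 : a + 1 ≠ 0 := ha'.ne
      field_simp
  calc ‖∫ t in Ioi s, f t‖
      = ‖(∫ t in Ioc s δ, f t) + ∫ t in Ioi δ, f t‖ := by
        rw [← setIntegral_union (Ioc_disjoint_Ioi le_rfl) measurableSet_Ioi
          ((hint s hs).mono_set Ioc_subset_Ioi_self) (hint δ hδ), Ioc_union_Ioi_eq_Ioi hsδ]
    _ ≤ ε / 2 * ‖s ^ (a + 1)‖ + ε / 2 * ‖s ^ (a + 1)‖ := norm_add_le_of_le hnear htail_s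
    _ = ε * ‖s ^ (a + 1)‖ := by ring

theorem stmt1_general {ρ : ℝ → E} (ha : -1 < a)
    (hint : ∀ s, 0 < s → IntegrableOn (fun t => (t ^ 2)⁻¹ • ρ t) (Ioi s))
    (hρ : Tendsto (fun s => s ^ a • ρ s) (𝓝[>] 0) (𝓝 0)) :
    Tendsto (fun s => s ^ (a + 1) • ∫ t in Ioi s, (t ^ 2)⁻¹ • ρ t) (𝓝[>] 0) (𝓝 0) := by
  have hρ' : (fun t => (t ^ 2)⁻¹ • ρ t) =o[𝓝[>] 0] (fun t => t ^ (-(a + 2))) := by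
    refine isLittleO_rpow_nhdsGT_zero_iff.2 (hρ.congr' ?_)
    filter_upwards [self_mem_nhdsWithin] with t (ht : 0 < t)
    rw [neg_neg, smul_smul, ← div_eq_mul_inv, ← Real.rpow_two, ← Real.rpow_sub ht,
      add_sub_cancel_right]
  have htail := isLittleO_integral_Ioi_rpow (by linarith) hint hρ'
  rw [isLittleO_rpow_nhdsGT_zero_iff] at htail
  rwa [show -(-(a + 2) + 1) = a + 1 by ring] at htail

end Asymptotics

theorem BddSupp.integrableOn_Ioi {g : ℝ → ℝ} {s : ℝ} (hg : BddSupp g)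
    (hc : ContinuousOn g (Ici s)) : IntegrableOn g (Ioi s) := by
  obtain ⟨R, hR⟩ := hg
  have hIcc : IntegrableOn g (Icc s R) := (hc.mono Icc_subset_Ici_self).integrableOn_Icc
  refine hIcc.of_forall_sdiff_eq_zero measurableSet_Ioi fun t ⟨hst, ht⟩ => hR t ?_
  by_contra! htR
  exact ht ⟨le_of_lt hst, htR.le⟩

theorem MemT.integrableOn_inv_sq_smul {n j : ℕ} {ρ : ℝ → ℝ} (hρ : MemT n j ρ) {s : ℝ}
    (hs : 0 < s) : IntegrableOn (fun t => (t ^ 2)⁻¹ • ρ t) (Ioi s) := by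
  obtain ⟨hc, ⟨R, hR⟩, -⟩ := hρ
  have hsupp : BddSupp (fun t => (t ^ 2)⁻¹ • ρ t) := ⟨R, fun t ht => by simp [hR t ht]⟩
  have hpos : ∀ t ∈ Ici s, 0 < t := fun t ht => hs.trans_le ht
  exact hsupp.integrableOn_Ioi <| .smul
    (.inv₀ (by fun_prop) fun t ht => (pow_pos (hpos t ht) 2).ne') (hc.mono hpos)

theorem stmt1 (n j : ℕ) (hn : 2 ≤ n) (hj : 1 ≤ j) (hjn : j ≤ n - 1)
    (ρ : ℝ → ℝ) (hρ : MemT (n - 1) j ρ) :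
    Tendsto (fun s => s ^ (n - j + 1) * ∫ t in Set.Ioi s, ρ t / t ^ 2)
      (nhdsWithin 0 (Set.Ioi 0)) (nhds 0) := by
  have hexp : n - 1 - j + 1 = n - j := by omega
  simpa only [smul_eq_mul, ← div_eq_inv_mul, ← Nat.cast_succ, Real.rpow_natCast] using
    stmt1_general (a := (n - j : ℕ)) (neg_one_lt_zero.trans_le (Nat.cast_nonneg _))
      (fun _ => hρ.integrableOn_inv_sq_smul) (by simpa [hexp] using hρ.2.2)
end

section
/- Let n ≥ 1, j ∈ {1,…,n} and l ∈ {0,…,n−j}. The map which sends ζ : (0,∞) → ℝ to the function s ↦ s^l ζ(s) + l ∫_s^∞ t^{l−1} ζ(t) dt is a bijection from T_j^n onto T_j^{n−l}, and its inverse sends ρ ∈ T_j^{n−l} to the function s ↦ ρ(s)/s^l − l ∫_s^∞ ρ(t)/t^{l+1} dt. -/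
open MeasureTheory Filter Set

/-- The transform `𝓡^l ζ(s) = s^l ζ(s) + l ∫_s^∞ t^(l-1) ζ(t) dt`. -/
noncomputable def Rl (l : ℕ) (ζ : ℝ → ℝ) : ℝ → ℝ :=
  fun s => s ^ l * ζ s + l * ∫ t in Set.Ioi s, t ^ (l - 1) * ζ t

/-- The inverse transform `𝓡^{-l} ρ(s) = ρ(s)/s^l − l ∫_s^∞ ρ(t)/t^(l+1) dt`. -/
noncomputable def RlInv (l : ℕ) (ρ : ℝ → ℝ) : ℝ → ℝ :=
  fun s => ρ s / s ^ l - l * ∫ t in Set.Ioi s, ρ t / t ^ (l + 1)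

/-!
Both transforms belong to the one-parameter family `𝓡^a ζ(s) = s^a ζ(s) + a ∫_s^∞ t^(a-1) ζ(t) dt`,
`a ∈ ℝ`. Integration by parts gives the group law `𝓡^a 𝓡^b = 𝓡^(a+b)`, so `𝓡^a` and `𝓡^(-a)` are
mutually inverse. For the behaviour at `0⁺`, put `r = n-j+1`: integrating `t^r ζ(t) = o(1)` against
`t^(a-1-r)` shows that `s^(r-a) ∫_s^∞ t^(a-1) ζ(t) dt = o(1)` as long as `a < r`.
-/

section TailIntegral

variable {E : Type*} [NormedAddCommGroup E] {g : ℝ → E} {a c r s δ : ℝ}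

theorem integrableOn_Ioi_of_eventuallyEq_zero (hg : ContinuousOn g (Ioi a)) (hg₀ : g =ᶠ[atTop] 0)
    (has : a < s) : IntegrableOn g (Ioi s) := by
  have hloc : LocallyIntegrableOn g (Ici s) :=
    (hg.mono (Ici_subset_Ioi.2 has)).locallyIntegrableOn measurableSet_Ici
  have hO : g =O[atTop] fun _ => (0 : ℝ) := hg₀.trans_isBigO (Asymptotics.isBigO_zero _ _)
  exact (hloc.integrableOn_of_isBigO_atTop hO ⟨univ, univ_mem, integrableOn_zero⟩).mono_set
    Ioi_subset_Ici_self

variable [NormedSpace ℝ E]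

theorem integral_Ioi_eventuallyEq_zero (hg₀ : g =ᶠ[atTop] 0) :
    (fun s => ∫ t in Ioi s, g t) =ᶠ[atTop] 0 := by
  filter_upwards [eventually_forall_ge_atTop.2 hg₀] with s hs
  exact setIntegral_eq_zero_of_forall_eq_zero fun t ht => hs t (le_of_lt ht)

theorem hasDerivAt_integral_Ioi [CompleteSpace E] (hg : IntegrableOn g (Ioi a)) (has : a < s)
    (hgs : ContinuousAt g s) : HasDerivAt (fun x => ∫ t in Ioi x, g t) (-g s) s := by
  have hmeas : StronglyMeasurableAtFilter g (nhds s) :=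
    ⟨Ioi a, Ioi_mem_nhds has, hg.aestronglyMeasurable⟩
  have hderiv : HasDerivAt (fun x => ∫ t in x..s, g t) (-g s) s :=
    intervalIntegral.integral_hasDerivAt_left IntervalIntegrable.refl hmeas hgs
  refine (hderiv.add_const (∫ t in Ioi s, g t)).congr_of_eventuallyEq ?_
  filter_upwards [Ioi_mem_nhds has] with x hx
  exact (intervalIntegral.integral_interval_add_Ioi (hg.mono_set (Ioi_subset_Ioi hx.le))
    (hg.mono_set (Ioi_subset_Ioi has.le))).symm

theorem hasDerivAt_integral_Ioi_of_continuousOn [CompleteSpace E] (hg : ContinuousOn g (Ioi a))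
    (hg₀ : g =ᶠ[atTop] 0) (has : a < s) :
    HasDerivAt (fun x => ∫ t in Ioi x, g t) (-g s) s := by
  obtain ⟨b, hab, hbs⟩ := exists_between has
  exact hasDerivAt_integral_Ioi (integrableOn_Ioi_of_eventuallyEq_zero hg hg₀ hab) hbs
    (hg.continuousAt (Ioi_mem_nhds has))

theorem continuousOn_integral_Ioi [CompleteSpace E] (hg : ContinuousOn g (Ioi a))
    (hg₀ : g =ᶠ[atTop] 0) : ContinuousOn (fun x => ∫ t in Ioi x, g t) (Ioi a) :=
  HasDerivAt.continuousOn fun _ hs => hasDerivAt_integral_Ioi_of_continuousOn hg hg₀ hs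

theorem norm_integral_Ioi_le_of_norm_le_rpow (hr : 0 < r) (hs : 0 < s) (hc : 0 ≤ c)
    (hg : IntegrableOn g (Ioi δ)) (hgc : ∀ t ∈ Ioc 0 δ, ‖g t‖ ≤ c * t ^ (-r - 1)) :
    ‖∫ t in Ioi s, g t‖ ≤ c / r * s ^ (-r) + ∫ t in Ioi δ, ‖g t‖ := by
  have hpow : IntegrableOn (fun t => c * t ^ (-r - 1)) (Ioi s) :=
    (integrableOn_Ioi_rpow_of_lt (by linarith) hs).const_mul c
  have htail : IntegrableOn ((Ioi δ).indicator fun t => ‖g t‖) (Ioi s) :=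
    ((integrable_indicator_iff measurableSet_Ioi).2 hg.norm).integrableOn
  have hbound : ∀ t ∈ Ioi s, ‖g t‖ ≤ c * t ^ (-r - 1) + (Ioi δ).indicator (fun t => ‖g t‖) t := by
    intro t ht
    have ht₀ : 0 < t := hs.trans ht
    rcases le_or_gt t δ with htδ | hδt
    · rw [indicator_of_notMem (notMem_Ioi.2 htδ), add_zero]
      exact hgc t ⟨ht₀, htδ⟩
    · rw [indicator_of_mem (mem_Ioi.2 hδt)]
      exact le_add_of_nonneg_left (by positivity)
  have htail_le : ∫ t in Ioi s, (Ioi δ).indicator (fun t => ‖g t‖) t ≤ ∫ t in Ioi δ, ‖g t‖ := by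
    rw [setIntegral_indicator measurableSet_Ioi]
    exact setIntegral_mono_set hg.norm (.of_forall fun t => norm_nonneg (g t))
      inter_subset_right.eventuallyLE
  calc ‖∫ t in Ioi s, g t‖
      ≤ ∫ t in Ioi s, (c * t ^ (-r - 1) + (Ioi δ).indicator (fun t => ‖g t‖) t) :=
        norm_integral_le_of_norm_le (hpow.add htail)
          (ae_restrict_of_forall_mem measurableSet_Ioi hbound)
    _ = c / r * s ^ (-r) + ∫ t in Ioi s, (Ioi δ).indicator (fun t => ‖g t‖) t := by
        rw [integral_add hpow htail, integral_const_mul,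
          integral_Ioi_rpow_of_lt (by linarith) hs, sub_add_cancel, neg_div_neg_eq, mul_div_assoc',
          div_mul_eq_mul_div]
    _ ≤ c / r * s ^ (-r) + ∫ t in Ioi δ, ‖g t‖ := by gcongr

theorem tendsto_rpow_smul_integral_Ioi (hr : 0 < r) (hg : ∀ δ > 0, IntegrableOn g (Ioi δ))
    (hlim : Tendsto (fun s : ℝ => s ^ (r + 1) • g s) (nhdsWithin 0 (Ioi 0)) (nhds 0)) :
    Tendsto (fun s : ℝ => s ^ r • ∫ t in Ioi s, g t) (nhdsWithin 0 (Ioi 0)) (nhds 0) := by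
  rw [Metric.tendsto_nhds]
  intro ε hε
  have hc : 0 < ε * r / 2 := by positivity
  obtain ⟨δ, hδ, hsmall⟩ := mem_nhdsGT_iff_exists_Ioc_subset.1
    (hlim.norm.eventually_le_const (norm_zero.trans_lt hc))
  have hgc : ∀ t ∈ Ioc 0 δ, ‖g t‖ ≤ ε * r / 2 * t ^ (-r - 1) := by
    intro t ht
    have ht₀ : 0 < t := ht.1
    have htg : ‖t ^ (r + 1) • g t‖ ≤ ε * r / 2 := hsmall ht
    rw [norm_smul, Real.norm_of_nonneg (by positivity)] at htg
    rwa [← neg_add', Real.rpow_neg ht₀.le, ← div_eq_mul_inv, le_div_iff₀' (by positivity)]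
  have htail : Tendsto (fun s : ℝ => s ^ r * ∫ t in Ioi δ, ‖g t‖) (nhdsWithin 0 (Ioi 0))
      (nhds 0) := by
    have hcont : Continuous fun s : ℝ => s ^ r * ∫ t in Ioi δ, ‖g t‖ :=
      (Real.continuous_rpow_const hr.le).mul_const _
    simpa [hr.ne'] using (hcont.tendsto 0).mono_left nhdsWithin_le_nhds
  filter_upwards [self_mem_nhdsWithin, htail.eventually_lt_const (half_pos hε)] with s hs hstail
  have hs₀ : 0 < s := hs
  calc dist (s ^ r • ∫ t in Ioi s, g t) 0
      = s ^ r * ‖∫ t in Ioi s, g t‖ := by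
        rw [dist_zero_right, norm_smul, Real.norm_of_nonneg (by positivity)]
    _ ≤ s ^ r * (ε * r / 2 / r * s ^ (-r) + ∫ t in Ioi δ, ‖g t‖) := by
        gcongr
        exact norm_integral_Ioi_le_of_norm_le_rpow hr hs₀ hc.le (hg δ hδ) hgc
    _ = ε / 2 + s ^ r * ∫ t in Ioi δ, ‖g t‖ := by
        rw [Real.rpow_neg hs₀.le]
        field_simp
    _ < ε := by linarith

end TailIntegral

section TailTransform

variable {E : Type*} [NormedAddCommGroup E] [NormedSpace ℝ E] {f ζ : ℝ → E} {a r s : ℝ}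

theorem continuousOn_rpow_smul (a : ℝ) (hζ : ContinuousOn ζ (Ioi 0)) :
    ContinuousOn (fun t : ℝ => t ^ a • ζ t) (Ioi 0) :=
  (continuousOn_id.rpow_const fun _ ht => .inl (ne_of_gt ht)).smul hζ

theorem smul_eventuallyEq_zero {α : Type*} {l : Filter α} {ψ : α → E} (φ : α → ℝ)
    (hψ : ψ =ᶠ[l] 0) : (fun t => φ t • ψ t) =ᶠ[l] 0 := by
  filter_upwards [hψ] with t ht
  exact (congrArg (φ t • ·) ht).trans (smul_zero _)

theorem smul_integral_Ioi_rpow_smul_integral_Ioi [CompleteSpace E] (a : ℝ)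
    (hf : ContinuousOn f (Ioi 0)) (hf₀ : f =ᶠ[atTop] 0) (hs : 0 < s) :
    a • ∫ t in Ioi s, t ^ (a - 1) • ∫ u in Ioi t, f u =
      (∫ t in Ioi s, t ^ a • f t) - s ^ a • ∫ t in Ioi s, f t := by
  have hF₀ := integral_Ioi_eventuallyEq_zero hf₀
  have hint₁ : IntegrableOn (fun t => a • t ^ (a - 1) • ∫ u in Ioi t, f u) (Ioi s) :=
    (integrableOn_Ioi_of_eventuallyEq_zero
      (continuousOn_rpow_smul _ (continuousOn_integral_Ioi hf hf₀))
      (smul_eventuallyEq_zero _ hF₀) hs).smul a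
  have hint₂ : IntegrableOn (fun t => t ^ a • f t) (Ioi s) :=
    integrableOn_Ioi_of_eventuallyEq_zero (continuousOn_rpow_smul _ hf)
      (smul_eventuallyEq_zero _ hf₀) hs
  have hderiv : ∀ t ∈ Ici s, HasDerivAt (fun x => x ^ a • ∫ u in Ioi x, f u)
      ((a • t ^ (a - 1) • ∫ u in Ioi t, f u) - t ^ a • f t) t := by
    intro t ht
    have ht₀ : 0 < t := hs.trans_le ht
    refine ((Real.hasDerivAt_rpow_const (.inl ht₀.ne')).smul
      (hasDerivAt_integral_Ioi_of_continuousOn hf hf₀ ht₀)).congr_deriv ?_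
    module
  have hlim : Tendsto (fun x : ℝ => x ^ a • ∫ u in Ioi x, f u) atTop (nhds 0) :=
    tendsto_const_nhds.congr' (smul_eventuallyEq_zero _ hF₀).symm
  have hparts := integral_Ioi_of_hasDerivAt_of_tendsto' hderiv (hint₁.sub hint₂) hlim
  rw [integral_sub hint₁ hint₂, integral_smul, zero_sub, sub_eq_iff_eq_add] at hparts
  rw [hparts, neg_add_eq_sub]

/-- The class `T_j^n`, which depends on `n` and `j` only through `r = n - j + 1`, for an arbitrary
real exponent `r` and functions with values in a normed space. Bounded support is encoded as
vanishing near `∞`, and values on `(-∞, 0]` are irrelevant. -/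
structure MemWeighted (r : ℝ) (ζ : ℝ → E) : Prop where
  continuousOn : ContinuousOn ζ (Ioi 0)
  eventuallyEq_zero : ζ =ᶠ[atTop] 0
  tendsto : Tendsto (fun s : ℝ => s ^ r • ζ s) (nhdsWithin 0 (Ioi 0)) (nhds 0)

/-- The transform `𝓡^a` for a real exponent `a`; it interpolates `Rl l`, the case `a = l`, and
`RlInv l`, the case `a = -l`. -/
noncomputable def tailTransform (a : ℝ) (ζ : ℝ → E) (s : ℝ) : E :=
  s ^ a • ζ s + a • ∫ t in Ioi s, t ^ (a - 1) • ζ t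

theorem tailTransform_zero (ζ : ℝ → E) : tailTransform 0 ζ = ζ := by
  ext s
  simp [tailTransform]

theorem tailTransform_tailTransform [CompleteSpace E] (a b : ℝ) (hζ : ContinuousOn ζ (Ioi 0))
    (hζ₀ : ζ =ᶠ[atTop] 0) (hs : 0 < s) :
    tailTransform a (tailTransform b ζ) s = tailTransform (a + b) ζ s := by
  let F (t : ℝ) : E := ∫ u in Ioi t, u ^ (b - 1) • ζ u
  have hf := continuousOn_rpow_smul (b - 1) hζ
  have hf₀ := smul_eventuallyEq_zero (· ^ (b - 1)) hζ₀
  have hint₁ : IntegrableOn (fun t => t ^ (a + b - 1) • ζ t) (Ioi s) :=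
    integrableOn_Ioi_of_eventuallyEq_zero (continuousOn_rpow_smul _ hζ)
      (smul_eventuallyEq_zero _ hζ₀) hs
  have hint₂ : IntegrableOn (fun t => b • t ^ (a - 1) • F t) (Ioi s) :=
    (integrableOn_Ioi_of_eventuallyEq_zero
      (continuousOn_rpow_smul _ (continuousOn_integral_Ioi hf hf₀))
      (smul_eventuallyEq_zero _ (integral_Ioi_eventuallyEq_zero hf₀)) hs).smul b
  have hsplit : ∫ t in Ioi s, t ^ (a - 1) • tailTransform b ζ t =
      (∫ t in Ioi s, t ^ (a + b - 1) • ζ t) + b • ∫ t in Ioi s, t ^ (a - 1) • F t := by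
    rw [← integral_smul, ← integral_add hint₁ hint₂]
    refine setIntegral_congr_fun measurableSet_Ioi fun t ht => ?_
    simp only [tailTransform, F, smul_add, smul_smul, ← Real.rpow_add (hs.trans ht)]
    ring_nf
  have hparts : a • ∫ t in Ioi s, t ^ (a - 1) • F t =
      (∫ t in Ioi s, t ^ (a + b - 1) • ζ t) - s ^ a • F s := by
    rw [smul_integral_Ioi_rpow_smul_integral_Ioi a hf hf₀ hs]
    congr 1
    refine setIntegral_congr_fun measurableSet_Ioi fun t ht => ?_
    simp only [smul_smul, ← Real.rpow_add (hs.trans ht), add_sub_assoc]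
  calc tailTransform a (tailTransform b ζ) s
      = s ^ a • (s ^ b • ζ s + b • F s) + (a • (∫ t in Ioi s, t ^ (a + b - 1) • ζ t) +
          b • a • ∫ t in Ioi s, t ^ (a - 1) • F t) := by
        rw [tailTransform, hsplit, smul_add, smul_comm a b, tailTransform]
    _ = (s ^ a * s ^ b) • ζ s + (a + b) • ∫ t in Ioi s, t ^ (a + b - 1) • ζ t := by
        rw [hparts]
        module
    _ = tailTransform (a + b) ζ s := by rw [← Real.rpow_add hs, tailTransform]

theorem tailTransform_neg_tailTransform [CompleteSpace E] (a : ℝ) (hζ : ContinuousOn ζ (Ioi 0))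
    (hζ₀ : ζ =ᶠ[atTop] 0) (hs : 0 < s) : tailTransform (-a) (tailTransform a ζ) s = ζ s := by
  rw [tailTransform_tailTransform _ _ hζ hζ₀ hs, neg_add_cancel, tailTransform_zero]

theorem memWeighted_tailTransform [CompleteSpace E] (hζ : MemWeighted r ζ) (har : a < r) :
    MemWeighted (r - a) (tailTransform a ζ) where
  continuousOn := (continuousOn_rpow_smul a hζ.continuousOn).add
    ((continuousOn_integral_Ioi (continuousOn_rpow_smul _ hζ.continuousOn)
      (smul_eventuallyEq_zero _ hζ.eventuallyEq_zero)).const_smul a)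
  eventuallyEq_zero := by
    have hF := integral_Ioi_eventuallyEq_zero
      (smul_eventuallyEq_zero (· ^ (a - 1)) hζ.eventuallyEq_zero)
    filter_upwards [smul_eventuallyEq_zero (· ^ a) hζ.eventuallyEq_zero,
      smul_eventuallyEq_zero (fun _ => a) hF] with s hζs hFs
    exact (congrArg₂ (· + ·) hζs hFs).trans (add_zero 0)
  tendsto := by
    have hpow (p q : ℝ) (hpq : p + q = r) :
        Tendsto (fun s : ℝ => s ^ p • s ^ q • ζ s) (nhdsWithin 0 (Ioi 0)) (nhds 0) := by
      refine hζ.tendsto.congr' ?_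
      filter_upwards [self_mem_nhdsWithin] with s hs
      rw [smul_smul, ← Real.rpow_add hs, hpq]
    have hint : Tendsto (fun s : ℝ => s ^ (r - a) • ∫ t in Ioi s, t ^ (a - 1) • ζ t)
        (nhdsWithin 0 (Ioi 0)) (nhds 0) :=
      tendsto_rpow_smul_integral_Ioi (sub_pos.2 har)
        (fun δ hδ => integrableOn_Ioi_of_eventuallyEq_zero
          (continuousOn_rpow_smul _ hζ.continuousOn)
          (smul_eventuallyEq_zero _ hζ.eventuallyEq_zero) hδ)
        (hpow _ _ (by ring))
    have hsum := (hpow (r - a) a (by ring)).add (hint.const_smul a)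
    rw [smul_zero, add_zero] at hsum
    refine hsum.congr fun s => ?_
    rw [tailTransform, smul_add, smul_comm a]

end TailTransform

theorem bddSupp_iff_eventuallyEq_zero {ζ : ℝ → ℝ} : BddSupp ζ ↔ ζ =ᶠ[atTop] 0 :=
  eventually_atTop.symm

theorem memT_iff_memWeighted {n j : ℕ} {ζ : ℝ → ℝ} :
    MemT n j ζ ↔ MemWeighted (n - j + 1 : ℕ) ζ := by
  have htends : Tendsto (fun s : ℝ => s ^ (n - j + 1) * ζ s) (nhdsWithin 0 (Ioi 0)) (nhds 0) ↔
      Tendsto (fun s : ℝ => s ^ ((n - j + 1 : ℕ) : ℝ) • ζ s) (nhdsWithin 0 (Ioi 0)) (nhds 0) := by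
    simp only [Real.rpow_natCast, smul_eq_mul]
  rw [MemT, bddSupp_iff_eventuallyEq_zero, htends]
  exact ⟨fun ⟨hc, h₀, ht⟩ => ⟨hc, h₀, ht⟩, fun ⟨hc, h₀, ht⟩ => ⟨hc, h₀, ht⟩⟩

theorem memT_sub_iff_memWeighted {n j l : ℕ} (hl : l ≤ n - j) {ζ : ℝ → ℝ} :
    MemT (n - l) j ζ ↔ MemWeighted ((n - j + 1 : ℕ) - l : ℝ) ζ := by
  have hexp : n - l - j + 1 = n - j + 1 - l := by omega
  rw [memT_iff_memWeighted, hexp, Nat.cast_sub (by omega)]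

theorem rl_eq_tailTransform (l : ℕ) : Rl l = tailTransform (l : ℝ) := by
  ext ζ s
  rcases l with _ | l
  · simp [Rl, tailTransform]
  · have hexp : ((l + 1 : ℕ) - 1 : ℝ) = l := by push_cast; ring
    simp only [Rl, tailTransform, hexp, smul_eq_mul, Real.rpow_natCast, Nat.add_sub_cancel]

theorem rlInv_eq_tailTransform_neg (l : ℕ) : RlInv l = tailTransform (-l : ℝ) := by
  have hpow (k : ℕ) (t : ℝ) : t ^ (-k : ℝ) = (t ^ k)⁻¹ := by
    rw [← zpow_natCast, ← zpow_neg, ← Real.rpow_intCast, Int.cast_neg, Int.cast_natCast]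
  ext ζ s
  have hexp : (-l - 1 : ℝ) = -(l + 1 : ℕ) := by push_cast; ring
  simp only [RlInv, tailTransform, hexp, hpow, smul_eq_mul, div_eq_inv_mul, neg_mul,
    sub_eq_add_neg]

theorem stmt2_general {E : Type*} [NormedAddCommGroup E] [NormedSpace ℝ E] [CompleteSpace E]
    {a r : ℝ} (hr : 0 < r) (har : a < r) :
    (∀ ζ : ℝ → E, MemWeighted r ζ → MemWeighted (r - a) (tailTransform a ζ)) ∧
    (∀ ρ : ℝ → E, MemWeighted (r - a) ρ → MemWeighted r (tailTransform (-a) ρ)) ∧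
    (∀ ζ : ℝ → E, MemWeighted r ζ →
      ∀ s > (0 : ℝ), tailTransform (-a) (tailTransform a ζ) s = ζ s) ∧
    (∀ ρ : ℝ → E, MemWeighted (r - a) ρ →
      ∀ s > (0 : ℝ), tailTransform a (tailTransform (-a) ρ) s = ρ s) :=
  ⟨fun _ hζ => memWeighted_tailTransform hζ har,
    fun _ hρ => by simpa using memWeighted_tailTransform (a := -a) hρ (by linarith),
    fun _ hζ _ hs => tailTransform_neg_tailTransform a hζ.continuousOn hζ.eventuallyEq_zero hs,
    fun _ hρ _ hs => by
      simpa using tailTransform_neg_tailTransform (-a) hρ.continuousOn hρ.eventuallyEq_zero hs⟩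

theorem stmt2 (n j l : ℕ) (hn : 1 ≤ n) (hj1 : 1 ≤ j) (hjn : j ≤ n) (hl : l ≤ n - j) :
    (∀ ζ, MemT n j ζ → MemT (n - l) j (Rl l ζ)) ∧
    (∀ ρ, MemT (n - l) j ρ → MemT n j (RlInv l ρ)) ∧
    (∀ ζ, MemT n j ζ → ∀ s > (0:ℝ), RlInv l (Rl l ζ) s = ζ s) ∧
    (∀ ρ, MemT (n - l) j ρ → ∀ s > (0:ℝ), Rl l (RlInv l ρ) s = ρ s) := by
  simp only [memT_sub_iff_memWeighted hl, rl_eq_tailTransform, rlInv_eq_tailTransform_neg]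
  simpa only [memT_iff_memWeighted] using stmt2_general (by positivity) (by norm_cast; omega)
end

section
/- Let n ≥ 1, j ∈ {1,…,n} and ζ ∈ T_j^n. Then for every integer m ∈ ℤ, lim_{s→0⁺} s^{n−j+1} ∫_s^∞ t (1+t²)^{m/2−1} ζ(t) dt = 0. -/
open MeasureTheory Filter Set

/-!
A continuous analogue of Kronecker's lemma. Fix `b > 0`. For `0 < s ≤ b` and `s < t`, monotonicity
of `s ↦ s ^ α` gives `‖s ^ α * F t‖ ≤ ‖(min t b) ^ α * F t‖`, and the right-hand side is integrable
on `(0, ∞)` as soon as `t ^ α * F t` is bounded near `0` and `F` is integrable near `∞`. Since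
`s ^ α * F t → 0` for each fixed `t`, dominated convergence yields `s ^ α * ∫ t in Ioi s, F t → 0`.
A weight that is continuous on `[0, ∞)` is bounded near `0`, so it can be absorbed into `F`.
-/

open Asymptotics
open scoped Topology

section Kronecker

variable {X : Type*} [TopologicalSpace X] [LinearOrder X] [OrderTopology X] {a : X}
  {E : Type*} [NormedAddCommGroup E] [NormedSpace ℝ E] {φ : X → ℝ} {F : X → E}

theorem integrableOn_Ioi_min_smul [MeasurableSpace X] [OpensMeasurableSpace X] {μ : Measure X}
    {b : X} (hab : a ≤ b) (hφF : IntegrableOn (fun t => φ t • F t) (Ioc a b) μ)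
    (hF : IntegrableOn F (Ioi b) μ) :
    IntegrableOn (fun t => φ (min t b) • F t) (Ioi a) μ := by
  rw [← Ioc_union_Ioi_eq_Ioi hab]
  refine .union (hφF.congr_fun (fun t ht => ?_) measurableSet_Ioc)
    (IntegrableOn.congr_fun (hF.smul (φ b)) (fun t ht => ?_) measurableSet_Ioi)
  · simp only [min_eq_left ht.2]
  · simp only [Pi.smul_apply, min_eq_right (le_of_lt ht)]

variable [DenselyOrdered X] [NoMaxOrder X]

theorem nonneg_of_monotoneOn_Ioi_of_tendsto_zero (hφ : MonotoneOn φ (Ioi a))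
    (hφ0 : Tendsto φ (𝓝[>] a) (𝓝 0)) {s : X} (hs : s ∈ Ioi a) : 0 ≤ φ s :=
  le_of_tendsto hφ0 <| by
    filter_upwards [Ioo_mem_nhdsGT hs] with t ht using hφ ht.1 hs ht.2.le

theorem norm_indicator_Ioi_smul_le_norm_min_smul (hφ : MonotoneOn φ (Ioi a))
    (hφ0 : Tendsto φ (𝓝[>] a) (𝓝 0)) {s b : X} (hs : s ∈ Ioc a b) (t : X) :
    ‖(Ioi s).indicator (fun t => φ s • F t) t‖ ≤ ‖φ (min t b) • F t‖ := by
  by_cases hst : t ∈ Ioi s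
  · have hφs : 0 ≤ φ s := nonneg_of_monotoneOn_Ioi_of_tendsto_zero hφ hφ0 hs.1
    have hsmin : s ≤ min t b := le_min (le_of_lt hst) hs.2
    have hle : φ s ≤ φ (min t b) := hφ hs.1 (hs.1.trans_le hsmin) hsmin
    rw [indicator_of_mem hst, norm_smul, norm_smul, Real.norm_of_nonneg hφs,
      Real.norm_of_nonneg (hφs.trans hle)]
    gcongr
  · simp only [indicator_of_notMem hst, norm_zero, norm_nonneg]

theorem tendsto_smul_setIntegral_Ioi_nhdsGT [FirstCountableTopology X] [MeasurableSpace X]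
    [OpensMeasurableSpace X] {μ : Measure X} (hφ : MonotoneOn φ (Ioi a))
    (hφ0 : Tendsto φ (𝓝[>] a) (𝓝 0))
    (hφF : IntegrableAtFilter (fun t => φ t • F t) (𝓝[>] a) μ)
    (hF : ∀ s ∈ Ioi a, IntegrableOn F (Ioi s) μ) :
    Tendsto (fun s => φ s • ∫ t in Ioi s, F t ∂μ) (𝓝[>] a) (𝓝 0) := by
  obtain ⟨U, hU, hφFU⟩ := hφF
  obtain ⟨b, hab, hbU⟩ := mem_nhdsGT_iff_exists_Ioc_subset.1 hU
  have htail : ∀ s ∈ Ioi a, ∫ t in Ioi a, (Ioi s).indicator (fun t => φ s • F t) t ∂μ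
      = φ s • ∫ t in Ioi s, F t ∂μ := fun s hs => by
    rw [setIntegral_indicator measurableSet_Ioi,
      inter_eq_right.2 (Ioi_subset_Ioi (le_of_lt hs)), integral_smul]
  have hmeas : ∀ s ∈ Ioi a, AEStronglyMeasurable ((Ioi s).indicator fun t => φ s • F t)
      (μ.restrict (Ioi a)) := fun s hs =>
    ((integrable_indicator_iff measurableSet_Ioi).2
      ((hF s hs).smul (φ s))).aestronglyMeasurable.restrict
  have hpointwise : ∀ t, Tendsto (fun s => (Ioi s).indicator (fun t => φ s • F t) t)
      (𝓝[>] a) (𝓝 0) := fun t => by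
    have hsmul : Tendsto (fun s => φ s • F t) (𝓝[>] a) (𝓝 0) := by
      simpa only [zero_smul] using hφ0.smul_const (F t)
    exact squeeze_zero_norm (fun s => norm_indicator_le_norm_self (fun t => φ s • F t) t)
      (tendsto_zero_iff_norm_tendsto_zero.1 hsmul)
  have hlim := tendsto_integral_filter_of_dominated_convergence (fun t => ‖φ (min t b) • F t‖)
    (eventually_mem_nhdsWithin.mono hmeas)
    (eventually_of_mem (Ioc_mem_nhdsGT hab) fun s hs =>
      ae_of_all _ (norm_indicator_Ioi_smul_le_norm_min_smul hφ hφ0 hs))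
    (integrableOn_Ioi_min_smul (le_of_lt hab) (hφFU.mono_set hbU) (hF b hab)).norm
    (ae_of_all _ hpointwise)
  rw [integral_zero] at hlim
  exact hlim.congr' (eventually_mem_nhdsWithin.mono htail)

end Kronecker

theorem tendsto_rpow_smul_setIntegral_Ioi_nhdsGT_zero {E : Type*} [NormedAddCommGroup E]
    [NormedSpace ℝ E] {α : ℝ} (hα : 0 < α) {F : ℝ → E} (hF : LocallyIntegrableOn F (Ioi 0))
    (htop : IntegrableAtFilter F atTop)
    (hzero : (fun t => t ^ α • F t) =O[𝓝[>] 0] fun _ => (1 : ℝ)) :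
    Tendsto (fun s => s ^ α • ∫ t in Ioi s, F t) (𝓝[>] 0) (𝓝 0) := by
  have hmono : MonotoneOn (fun s : ℝ => s ^ α) (Ioi 0) :=
    (Real.monotoneOn_rpow_Ici_of_exponent_nonneg hα.le).mono Ioi_subset_Ici_self
  have hcont : Continuous fun s : ℝ => s ^ α := Real.continuous_rpow_const hα.le
  have hlim : Tendsto (fun s : ℝ => s ^ α) (𝓝[>] 0) (𝓝 0) := by
    simpa only [Real.zero_rpow hα.ne'] using (hcont.tendsto 0).mono_left nhdsWithin_le_nhds
  have hmeas : StronglyMeasurableAtFilter (fun t => t ^ α • F t) (𝓝[>] 0) :=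
    ⟨Ioi 0, self_mem_nhdsWithin, hcont.aestronglyMeasurable.smul hF.aestronglyMeasurable⟩
  refine tendsto_smul_setIntegral_Ioi_nhdsGT hmono hlim
    ((volume.finiteAt_nhdsWithin 0 (Ioi 0)).integrableAtFilter hmeas
      ((isBigO_one_iff ℝ).1 hzero)) fun s hs => ?_
  exact (integrableOn_Ici_iff_integrableAtFilter_atTop.2
    ⟨htop, hF.mono_set (Ici_subset_Ioi.2 hs)⟩).mono_set Ioi_subset_Ici_self

theorem BddSupp.mul_left {ζ : ℝ → ℝ} (hζ : BddSupp ζ) (w : ℝ → ℝ) :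
    BddSupp fun t => w t * ζ t :=
  hζ.imp fun _ hR t ht => mul_eq_zero_of_right (w t) (hR t ht)

theorem BddSupp.integrableAtFilter_atTop {ζ : ℝ → ℝ} (hζ : BddSupp ζ) (μ : Measure ℝ) :
    IntegrableAtFilter ζ atTop μ :=
  let ⟨R, hR⟩ := hζ
  ⟨Ici R, Ici_mem_atTop R, integrableOn_zero.congr_fun (fun t ht => (hR t ht).symm)
    measurableSet_Ici⟩

theorem MemT.rpow_mul_isBigO_one {n j : ℕ} {ζ : ℝ → ℝ} (hζ : MemT n j ζ) :
    (fun t => t ^ ((n - j + 1 : ℕ) : ℝ) * ζ t) =O[𝓝[>] 0] fun _ => (1 : ℝ) := by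
  simpa only [Real.rpow_natCast] using hζ.2.2.isBigO_one ℝ

theorem continuous_mul_one_add_sq_rpow (p : ℝ) : Continuous fun t : ℝ => t * (1 + t ^ 2) ^ p := by
  have hbase : Continuous fun t : ℝ => 1 + t ^ 2 := by fun_prop
  exact continuous_id.mul (hbase.rpow_const fun t => Or.inl (by positivity))

theorem stmt4_general {α : ℝ} (hα : 0 < α) {w ζ : ℝ → ℝ} (hw : ContinuousOn w (Ici 0))
    (hζ : LocallyIntegrableOn ζ (Ioi 0)) (htop : IntegrableAtFilter (fun t => w t * ζ t) atTop)
    (hzero : (fun t => t ^ α * ζ t) =O[𝓝[>] 0] fun _ => (1 : ℝ)) :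
    Tendsto (fun s => s ^ α * ∫ t in Ioi s, w t * ζ t) (𝓝[>] 0) (𝓝 0) := by
  have hw_zero : w =O[𝓝[>] 0] fun _ => (1 : ℝ) :=
    ((hw 0 self_mem_Ici).mono Ioi_subset_Ici_self).tendsto.isBigO_one ℝ
  have hbdd : (fun t => t ^ α * (w t * ζ t)) =O[𝓝[>] 0] fun _ => (1 : ℝ) := by
    simpa only [mul_left_comm, mul_one] using hw_zero.mul hzero
  exact tendsto_rpow_smul_setIntegral_Ioi_nhdsGT_zero hα
    (hζ.continuousOn_mul (hw.mono Ioi_subset_Ici_self) isOpen_Ioi.isLocallyClosed) htop hbdd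

theorem stmt4 (n j : ℕ) (hn : 1 ≤ n) (hj1 : 1 ≤ j) (hjn : j ≤ n)
    (ζ : ℝ → ℝ) (hζ : MemT n j ζ) (m : ℤ) :
    Tendsto
      (fun s => s ^ (n - j + 1) * ∫ t in Set.Ioi s, t * (1 + t ^ 2) ^ ((m : ℝ) / 2 - 1) * ζ t)
      (nhdsWithin 0 (Set.Ioi 0)) (nhds 0) := by
  simpa only [Real.rpow_natCast] using stmt4_general (Nat.cast_pos.2 (n - j).succ_pos)
    (continuous_mul_one_add_sq_rpow _).continuousOn (hζ.1.locallyIntegrableOn measurableSet_Ioi)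
    ((hζ.2.1.mul_left _).integrableAtFilter_atTop volume) hζ.rpow_mul_isBigO_one
end

section
/- Let n ≥ 1, j ∈ {1,…,n} and let l ≥ 1 be an integer. The map which sends ζ : (0,∞) → ℝ to the function s ↦ (1+s²)^{l/2} ζ(s) + l ∫_s^∞ t (1+t²)^{l/2−1} ζ(t) dt is a bijection from T_j^n onto T_j^n, and its inverse sends ρ ∈ T_j^n to the function s ↦ ρ(s)/(1+s²)^{l/2} − l ∫_s^∞ t ρ(t)/(1+t²)^{l/2+1} dt. -/
open MeasureTheory Filter Set

/-- The transform `𝒯^l ζ(s) = (1+s²)^(l/2) ζ(s) + l ∫_s^∞ t (1+t²)^(l/2−1) ζ(t) dt`. -/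
noncomputable def Tl (l : ℕ) (ζ : ℝ → ℝ) : ℝ → ℝ :=
  fun s => (1 + s ^ 2) ^ ((l : ℝ) / 2) * ζ s +
    l * ∫ t in Set.Ioi s, t * (1 + t ^ 2) ^ ((l : ℝ) / 2 - 1) * ζ t

/-- The inverse transform `𝒯^{-l} ρ(s) = ρ(s)/(1+s²)^(l/2) − l ∫_s^∞ t ρ(t)/(1+t²)^(l/2+1) dt`. -/
noncomputable def TlInv (l : ℕ) (ρ : ℝ → ℝ) : ℝ → ℝ :=
  fun s => ρ s / (1 + s ^ 2) ^ ((l : ℝ) / 2) -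
    l * ∫ t in Set.Ioi s, t * ρ t / (1 + t ^ 2) ^ ((l : ℝ) / 2 + 1)

/-!
Formally `(1+s²)^p ζ(s) + 2p ∫_s^∞ t (1+t²)^(p-1) ζ(t) dt` is `-∫_s^∞ w dζ` with
`w(t) = (1+t²)^p`: the operator rescales the differential `dζ` by `w`. Hence the operators of two
weights compose to the operator of the product weight, which an integration by parts confirms, and
the weights `(1+t²)^(l/2)` and `(1+t²)^(-l/2)` give mutually inverse operators. The growth condition
at `0` is preserved because `s^k f(t)` is dominated by `t^k f(t)` for `t > s` and tends to `0` with
`s` when `k ≥ 1`, so that dominated convergence gives `s^k ∫_s^∞ f → 0`.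
-/

open Topology

theorem norm_indicator_Ioi_pow_mul_le {f : ℝ → ℝ} {k : ℕ} {M R s : ℝ}
    (hM : ∀ t, 0 < t → |t ^ k * f t| ≤ M) (hR : ∀ t, R ≤ t → f t = 0) (hs : 0 < s) (t : ℝ) :
    ‖(Ioi s).indicator (fun u => s ^ k * f u) t‖ ≤ (Ioc 0 R).indicator (fun _ => M) t := by
  rcases le_or_gt t s with hts | hst
  · rw [indicator_of_notMem (notMem_Ioi.2 hts), norm_zero]
    exact indicator_nonneg (fun u hu => (abs_nonneg _).trans (hM u hu.1)) t
  have ht : 0 < t := hs.trans hst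
  rw [indicator_of_mem (mem_Ioi.2 hst)]
  rcases le_or_gt t R with htR | hRt
  · rw [indicator_of_mem (mem_Ioc.2 ⟨ht, htR⟩)]
    calc ‖s ^ k * f t‖ = s ^ k * |f t| := by
          rw [Real.norm_eq_abs, abs_mul, abs_of_pos (pow_pos hs k)]
      _ ≤ t ^ k * |f t| := by gcongr
      _ = |t ^ k * f t| := by rw [abs_mul, abs_of_pos (pow_pos ht k)]
      _ ≤ M := hM t ht
  · rw [hR t hRt.le, mul_zero, norm_zero, indicator_of_notMem fun h => hRt.not_ge h.2]

namespace BddSupp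

variable {f g v : ℝ → ℝ} {a s : ℝ}

theorem mul_left_s5 (hf : BddSupp f) (g : ℝ → ℝ) : BddSupp (fun t => g t * f t) := by
  obtain ⟨R, hR⟩ := hf
  exact ⟨R, fun t ht => by simp only [hR t ht, mul_zero]⟩

theorem add (hf : BddSupp f) (hg : BddSupp g) : BddSupp (fun t => f t + g t) := by
  obtain ⟨R, hR⟩ := hf
  obtain ⟨R', hR'⟩ := hg
  refine ⟨max R R', fun t ht => ?_⟩
  simp only [hR t ((le_max_left _ _).trans ht), hR' t ((le_max_right _ _).trans ht), add_zero]

theorem tendsto_atTop (hf : BddSupp f) : Tendsto f atTop (𝓝 0) := by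
  obtain ⟨R, hR⟩ := hf
  refine tendsto_const_nhds.congr' ?_
  filter_upwards [eventually_ge_atTop R] with t ht using (hR t ht).symm

theorem setIntegral_Ioi (hf : BddSupp f) : BddSupp (fun s => ∫ t in Ioi s, f t) := by
  obtain ⟨R, hR⟩ := hf
  exact ⟨R, fun s hs => setIntegral_eq_zero_of_forall_eq_zero
    fun t (ht : s < t) => hR t (hs.trans ht.le)⟩

theorem integrableOn_Ioi_s5 (hf : BddSupp f) (hfc : ContinuousOn f (Ioi a)) (hs : a < s) :
    IntegrableOn f (Ioi s) := by
  obtain ⟨R, hR⟩ := hf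
  have hIcc : IntegrableOn f (Icc s R) :=
    (hfc.mono fun t ht => hs.trans_le ht.1).integrableOn_Icc
  refine hIcc.of_forall_sdiff_eq_zero measurableSet_Ioi fun t ht => hR t ?_
  exact (not_le.1 fun htR => ht.2 ⟨le_of_lt ht.1, htR⟩).le

theorem hasDerivAt_setIntegral_Ioi (hf : BddSupp f) (hfc : ContinuousOn f (Ioi a))
    (hs : a < s) : HasDerivAt (fun u => ∫ t in Ioi u, f t) (-f s) s := by
  have hderiv : HasDerivAt (fun u => ∫ t in s..u, f t) (f s) s :=
    intervalIntegral.integral_hasDerivAt_right IntervalIntegrable.refl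
      (hfc.stronglyMeasurableAtFilter isOpen_Ioi s hs) (hfc.continuousAt (Ioi_mem_nhds hs))
  refine (hderiv.const_sub (∫ t in Ioi s, f t)).congr_of_eventuallyEq ?_
  filter_upwards [Ioi_mem_nhds hs] with u hu
  rw [← intervalIntegral.integral_Ioi_sub_Ioi' (hf.integrableOn_Ioi_s5 hfc hs)
    (hf.integrableOn_Ioi_s5 hfc hu), sub_sub_cancel]

theorem continuousOn_setIntegral_Ioi (hf : BddSupp f) (hfc : ContinuousOn f (Ioi a)) :
    ContinuousOn (fun u => ∫ t in Ioi u, f t) (Ioi a) :=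
  fun _ hs => (hf.hasDerivAt_setIntegral_Ioi hfc hs).continuousAt.continuousWithinAt

theorem setIntegral_Ioi_deriv_mul_setIntegral_Ioi (hf : BddSupp f)
    (hfc : ContinuousOn f (Ioi a)) (hv : ContDiff ℝ 1 v) (hs : a < s) :
    ∫ t in Ioi s, deriv v t * ∫ u in Ioi t, f u =
      (∫ t in Ioi s, v t * f t) - v s * ∫ u in Ioi s, f u := by
  set F : ℝ → ℝ := fun t => ∫ u in Ioi t, f u
  have hF : BddSupp F := hf.setIntegral_Ioi
  have hFderiv (t : ℝ) (ht : a < t) : HasDerivAt F (-f t) t :=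
    hf.hasDerivAt_setIntegral_Ioi hfc ht
  have hvf : IntegrableOn (fun t => v t * -f t) (Ioi s) := by
    simpa only [mul_neg, Pi.neg_def] using
      ((hf.mul_left_s5 v).integrableOn_Ioi_s5 (hv.continuous.continuousOn.mul hfc) hs).neg
  have hvF : IntegrableOn (fun t => deriv v t * F t) (Ioi s) :=
    (hF.mul_left_s5 _).integrableOn_Ioi_s5
      (hv.continuous_deriv_one.continuousOn.mul (hf.continuousOn_setIntegral_Ioi hfc)) hs
  have hleft : Tendsto (v * F) (𝓝[>] s) (𝓝 (v s * F s)) :=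
    (hv.continuous.continuousAt.mul (hFderiv s hs).continuousAt).mono_left nhdsWithin_le_nhds
  have hparts := integral_Ioi_mul_deriv_eq_deriv_mul
    (fun t _ => (hv.differentiable one_ne_zero t).hasDerivAt)
    (fun t ht => hFderiv t (hs.trans ht)) hvf hvF hleft (hF.mul_left_s5 v).tendsto_atTop
  simp only [mul_neg, integral_neg] at hparts
  linarith

theorem exists_forall_abs_le_of_tendsto (hf : BddSupp f) (hfc : ContinuousOn f (Ioi a)) {L : ℝ}
    (hlim : Tendsto f (𝓝[>] a) (𝓝 L)) : ∃ M, ∀ t, a < t → |f t| ≤ M := by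
  obtain ⟨R, hR⟩ := hf
  obtain ⟨δ, hδ, hnear⟩ := mem_nhdsGT_iff_exists_Ioo_subset.1
    (hlim.abs.eventually_lt_const (lt_add_one |L|))
  obtain ⟨C, hC⟩ := isCompact_Icc.exists_bound_of_continuousOn
    (hfc.mono fun t (ht : t ∈ Icc δ R) => lt_of_lt_of_le hδ ht.1)
  refine ⟨max (|L| + 1) (max C 0), fun t ht => ?_⟩
  rcases lt_or_ge t δ with htδ | hδt
  · exact le_max_of_le_left (le_of_lt (hnear ⟨ht, htδ⟩))
  rcases le_or_gt t R with htR | hRt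
  · exact le_max_of_le_right (le_max_of_le_left (hC t ⟨hδt, htR⟩))
  · simp [hR t hRt.le]

theorem tendsto_pow_mul_setIntegral_Ioi (hf : BddSupp f) (hfc : ContinuousOn f (Ioi 0))
    {k : ℕ} (hk : k ≠ 0) (hlim : Tendsto (fun s => s ^ k * f s) (𝓝[>] 0) (𝓝 0)) :
    Tendsto (fun s => s ^ k * ∫ t in Ioi s, f t) (𝓝[>] 0) (𝓝 0) := by
  obtain ⟨M, hM⟩ := (hf.mul_left_s5 _).exists_forall_abs_le_of_tendsto
    ((continuous_pow k).continuousOn.mul hfc) hlim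
  have hpow : Tendsto (fun s : ℝ => s ^ k) (𝓝[>] 0) (𝓝 0) := by
    simpa only [zero_pow hk] using ((continuous_pow k).tendsto (0 : ℝ)).mono_left nhdsWithin_le_nhds
  have hpos : ∀ᶠ s in 𝓝[>] (0 : ℝ), 0 < s := self_mem_nhdsWithin
  obtain ⟨R, hR⟩ := hf
  have hconv : Tendsto (fun s => ∫ t, (Ioi s).indicator (fun t => s ^ k * f t) t)
      (𝓝[>] 0) (𝓝 (∫ _ : ℝ, (0 : ℝ))) := by
    refine tendsto_integral_filter_of_dominated_convergence ((Ioc 0 R).indicator fun _ => M)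
      ?_ ?_ ((integrable_indicator_iff measurableSet_Ioc).2 (by simp)) (ae_of_all _ fun t => ?_)
    · filter_upwards [hpos] with s hs
      have hint : IntegrableOn (fun t => s ^ k * f t) (Ioi s) :=
        (integrableOn_Ioi_s5 ⟨R, hR⟩ hfc hs).const_mul _
      exact (hint.integrable_indicator measurableSet_Ioi).aestronglyMeasurable
    · filter_upwards [hpos] with s hs using ae_of_all _ (norm_indicator_Ioi_pow_mul_le hM hR hs)
    · refine squeeze_zero_norm (fun s => norm_indicator_le_norm_self _ t) ?_
      simpa using (hpow.mul_const (f t)).norm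
  simpa only [integral_indicator measurableSet_Ioi, integral_const_mul, integral_zero] using hconv

end BddSupp

/-- The operator `ζ ↦ (s ↦ w(s) ζ(s) + ∫_s^∞ w'(t) ζ(t) dt)`, formally `s ↦ -∫_s^∞ w dζ`, of which
both transforms of the theorem are instances. It is multiplicative in the weight `w`. -/
noncomputable def weightTransform (w ζ : ℝ → ℝ) (s : ℝ) : ℝ :=
  w s * ζ s + ∫ t in Ioi s, deriv w t * ζ t

theorem weightTransform_one (ζ : ℝ → ℝ) : weightTransform 1 ζ = ζ := by
  funext s
  simp [weightTransform]

theorem weightTransform_weightTransform {v w ζ : ℝ → ℝ} {a s : ℝ} (hv : ContDiff ℝ 1 v)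
    (hw : ContDiff ℝ 1 w) (hζ : BddSupp ζ) (hζc : ContinuousOn ζ (Ioi a)) (hs : a < s) :
    weightTransform v (weightTransform w ζ) s = weightTransform (v * w) ζ s := by
  have hv' := hv.continuous_deriv_one
  have hw' := hw.continuous_deriv_one
  have hf : BddSupp fun t => deriv w t * ζ t := hζ.mul_left_s5 _
  have hfc : ContinuousOn (fun t => deriv w t * ζ t) (Ioi a) := hw'.continuousOn.mul hζc
  have hlocal : IntegrableOn (fun t => deriv v t * (w t * ζ t)) (Ioi s) :=
    ((hζ.mul_left_s5 w).mul_left_s5 _).integrableOn_Ioi_s5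
      (hv'.continuousOn.mul (hw.continuous.continuousOn.mul hζc)) hs
  have htail : IntegrableOn (fun t => deriv v t * ∫ u in Ioi t, deriv w u * ζ u) (Ioi s) :=
    (hf.setIntegral_Ioi.mul_left_s5 _).integrableOn_Ioi_s5
      (hv'.continuousOn.mul (hf.continuousOn_setIntegral_Ioi hfc)) hs
  have hcross : IntegrableOn (fun t => v t * (deriv w t * ζ t)) (Ioi s) :=
    (hf.mul_left_s5 v).integrableOn_Ioi_s5 (hv.continuous.continuousOn.mul hfc) hs
  have hleibniz (t : ℝ) : deriv (v * w) t * ζ t =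
      deriv v t * (w t * ζ t) + v t * (deriv w t * ζ t) := by
    rw [deriv_mul (hv.differentiable one_ne_zero t) (hw.differentiable one_ne_zero t)]
    ring
  simp only [weightTransform, mul_add, hleibniz, Pi.mul_apply]
  rw [integral_add hlocal htail, integral_add hlocal hcross,
    hf.setIntegral_Ioi_deriv_mul_setIntegral_Ioi hfc hv hs]
  ring

namespace MemT

variable {n j : ℕ} {ζ ρ w : ℝ → ℝ}

theorem add (hζ : MemT n j ζ) (hρ : MemT n j ρ) : MemT n j (fun s => ζ s + ρ s) := by
  obtain ⟨hζc, hζb, hζlim⟩ := hζ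
  obtain ⟨hρc, hρb, hρlim⟩ := hρ
  exact ⟨hζc.add hρc, hζb.add hρb, by simpa only [mul_add, add_zero] using hζlim.add hρlim⟩

theorem continuous_mul (hζ : MemT n j ζ) (hw : Continuous w) : MemT n j (fun s => w s * ζ s) := by
  obtain ⟨hζc, hζb, hζlim⟩ := hζ
  refine ⟨hw.continuousOn.mul hζc, hζb.mul_left_s5 w, ?_⟩
  simpa only [mul_left_comm, mul_zero] using
    ((hw.tendsto 0).mono_left nhdsWithin_le_nhds).mul hζlim

theorem setIntegral_Ioi (hζ : MemT n j ζ) : MemT n j (fun s => ∫ t in Ioi s, ζ t) := by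
  obtain ⟨hζc, hζb, hζlim⟩ := hζ
  exact ⟨hζb.continuousOn_setIntegral_Ioi hζc, hζb.setIntegral_Ioi,
    hζb.tendsto_pow_mul_setIntegral_Ioi hζc (Nat.succ_ne_zero _) hζlim⟩

protected theorem weightTransform (hζ : MemT n j ζ) (hw : ContDiff ℝ 1 w) :
    MemT n j (weightTransform w ζ) :=
  (hζ.continuous_mul hw.continuous).add
    (hζ.continuous_mul hw.continuous_deriv_one).setIntegral_Ioi

theorem weightTransform_weightTransform_of_mul_eq_one {v : ℝ → ℝ} (hζ : MemT n j ζ)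
    (hv : ContDiff ℝ 1 v) (hw : ContDiff ℝ 1 w) (hvw : v * w = 1) {s : ℝ} (hs : 0 < s) :
    weightTransform v (weightTransform w ζ) s = ζ s := by
  rw [weightTransform_weightTransform hv hw hζ.2.1 hζ.1 hs, hvw, weightTransform_one]

end MemT

theorem contDiff_one_add_sq_rpow (p : ℝ) : ContDiff ℝ 1 fun s : ℝ => (1 + s ^ 2) ^ p :=
  ContDiff.rpow_const_of_ne (by fun_prop) fun s => by positivity

theorem deriv_one_add_sq_rpow (p s : ℝ) :
    deriv (fun s : ℝ => (1 + s ^ 2) ^ p) s = 2 * p * (s * (1 + s ^ 2) ^ (p - 1)) := by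
  rw [deriv_rpow_const (by fun_prop) (Or.inl (by positivity))]
  simp only [deriv_const_add, deriv_pow_field]
  push_cast
  ring

theorem Tl_eq_weightTransform (l : ℕ) :
    Tl l = weightTransform fun s => (1 + s ^ 2) ^ ((l : ℝ) / 2) := by
  funext ζ s
  simp only [Tl, weightTransform, deriv_one_add_sq_rpow, mul_assoc, integral_const_mul]
  ring

theorem TlInv_eq_weightTransform (l : ℕ) :
    TlInv l = weightTransform fun s => (1 + s ^ 2) ^ (-((l : ℝ) / 2)) := by
  funext ρ s
  have hkernel (t : ℝ) : t * ρ t / (1 + t ^ 2) ^ ((l : ℝ) / 2 + 1) =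
      t * (1 + t ^ 2) ^ (-((l : ℝ) / 2) - 1) * ρ t := by
    rw [← neg_add', Real.rpow_neg (by positivity)]
    ring
  simp only [TlInv, hkernel]
  simp only [weightTransform, deriv_one_add_sq_rpow, mul_assoc, integral_const_mul,
    Real.rpow_neg (show (0 : ℝ) ≤ 1 + s ^ 2 by positivity)]
  ring

theorem one_add_sq_rpow_neg_mul (p : ℝ) :
    ((fun s : ℝ => (1 + s ^ 2) ^ (-p)) * fun s => (1 + s ^ 2) ^ p) = 1 := by
  funext s
  have hs : (0 : ℝ) < 1 + s ^ 2 := by positivity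
  rw [Pi.mul_apply, ← Real.rpow_add hs, neg_add_cancel, Real.rpow_zero, Pi.one_apply]

theorem stmt5_general (n j : ℕ) {v w : ℝ → ℝ} (hv : ContDiff ℝ 1 v) (hw : ContDiff ℝ 1 w)
    (hvw : v * w = 1) :
    (∀ ζ, MemT n j ζ → MemT n j (weightTransform w ζ)) ∧
    (∀ ρ, MemT n j ρ → MemT n j (weightTransform v ρ)) ∧
    (∀ ζ, MemT n j ζ → ∀ s > (0 : ℝ), weightTransform v (weightTransform w ζ) s = ζ s) ∧
    (∀ ρ, MemT n j ρ → ∀ s > (0 : ℝ), weightTransform w (weightTransform v ρ) s = ρ s) :=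
  ⟨fun _ hζ => hζ.weightTransform hw, fun _ hρ => hρ.weightTransform hv,
    fun _ hζ _ hs => hζ.weightTransform_weightTransform_of_mul_eq_one hv hw hvw hs,
    fun _ hρ _ hs => hρ.weightTransform_weightTransform_of_mul_eq_one hw hv (mul_comm v w ▸ hvw) hs⟩

theorem stmt5 (n j l : ℕ) (hn : 1 ≤ n) (hj1 : 1 ≤ j) (hjn : j ≤ n) (hl : 1 ≤ l) :
    (∀ ζ, MemT n j ζ → MemT n j (Tl l ζ)) ∧
    (∀ ρ, MemT n j ρ → MemT n j (TlInv l ρ)) ∧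
    (∀ ζ, MemT n j ζ → ∀ s > (0:ℝ), TlInv l (Tl l ζ) s = ζ s) ∧
    (∀ ρ, MemT n j ρ → ∀ s > (0:ℝ), Tl l (TlInv l ρ) s = ρ s) := by
  rw [Tl_eq_weightTransform, TlInv_eq_weightTransform]
  exact stmt5_general n j (contDiff_one_add_sq_rpow _) (contDiff_one_add_sq_rpow _)
    (one_add_sq_rpow_neg_mul _)
end

section
/- Let ζ : (0,∞) → ℝ be continuous with bounded support and let l ≥ 1 be an integer. Then for every s > 0: l² ∫_s^∞ (t/(1+t²)^{l/2+1}) (∫_t^∞ r (1+r²)^{l/2−1} ζ(r) dr) dt = l (1+s²)^{−l/2} ∫_s^∞ t (1+t²)^{l/2−1} ζ(t) dt − l ∫_s^∞ t ζ(t)/(1+t²) dt. -/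
open MeasureTheory Filter Set

/-!
For `a ≠ 0` the function `t / (1 + t ^ 2) ^ (a / 2 + 1)` is nonnegative on `(0, ∞)` and has the
primitive `U t = -(1 + t ^ 2) ^ (-(a / 2)) / a`. By Fubini on the triangle `s < t < r`, the iterated
integral equals the integral over `r > s` of `(U r - U s) * r * (1 + r ^ 2) ^ (a / 2 - 1) * ζ r`.
In the term with `U r` the powers of `1 + r ^ 2` collapse to `(1 + r ^ 2)⁻¹`, and the term with
`U s` is a constant multiple of the integral of `r * (1 + r ^ 2) ^ (a / 2 - 1) * ζ r`.
-/

section Fubini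

variable {α E : Type*} [LinearOrder α] [TopologicalSpace α] [OrderClosedTopology α]
  [SecondCountableTopology α] [MeasurableSpace α] [OpensMeasurableSpace α]
  [NormedAddCommGroup E] [NormedSpace ℝ E] {μ ν : Measure α} [SFinite μ] [SFinite ν]
  {s : α} {f : α → ℝ} {g : α → E}

theorem integrable_indicator_lt_smul_prod
    (hfm : AEStronglyMeasurable f (μ.restrict (Ioi s)))
    (hf : ∀ r ∈ Ioi s, IntegrableOn f (Ioo s r) μ)
    (hgm : AEStronglyMeasurable g (ν.restrict (Ioi s)))
    (hfg : IntegrableOn (fun r => (∫ t in Ioo s r, ‖f t‖ ∂μ) • g r) (Ioi s) ν) :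
    Integrable ({p : α × α | p.1 < p.2}.indicator fun p => f p.1 • g p.2)
      ((μ.restrict (Ioi s)).prod (ν.restrict (Ioi s))) := by
  have hT : MeasurableSet {p : α × α | p.1 < p.2} := measurableSet_lt'
  have hsec (r : α) : (fun t => {p : α × α | p.1 < p.2}.indicator (fun p => f p.1 • g p.2) (t, r)) =
      (Iio r).indicator fun t => f t • g r := rfl
  have hm : AEStronglyMeasurable (fun p : α × α => f p.1 • g p.2)
      ((μ.restrict (Ioi s)).prod (ν.restrict (Ioi s))) := hfm.comp_fst.smul hgm.comp_snd
  rw [integrable_prod_iff' (hm.indicator hT)]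
  constructor
  · refine ae_restrict_of_forall_mem measurableSet_Ioi fun r hr => ?_
    rw [hsec, integrable_indicator_iff measurableSet_Iio, IntegrableOn,
      Measure.restrict_restrict measurableSet_Iio, Iio_inter_Ioi]
    exact (hf r hr).smul_const (g r)
  · refine hfg.norm.congr (.of_forall fun r => ?_)
    have hnorm : 0 ≤ ∫ t in Ioo s r, ‖f t‖ ∂μ := integral_nonneg fun _ => norm_nonneg _
    change _ = ∫ t in Ioi s, ‖(Iio r).indicator (fun t => f t • g r) t‖ ∂μ
    simp only [norm_indicator_eq_indicator_norm, norm_smul]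
    rw [setIntegral_indicator measurableSet_Iio, Ioi_inter_Iio, integral_mul_const,
      Real.norm_of_nonneg hnorm]

theorem integral_Ioi_smul_integral_Ioi [CompleteSpace E]
    (hfm : AEStronglyMeasurable f (μ.restrict (Ioi s)))
    (hf : ∀ r ∈ Ioi s, IntegrableOn f (Ioo s r) μ)
    (hgm : AEStronglyMeasurable g (ν.restrict (Ioi s)))
    (hfg : IntegrableOn (fun r => (∫ t in Ioo s r, ‖f t‖ ∂μ) • g r) (Ioi s) ν) :
    ∫ t in Ioi s, f t • ∫ r in Ioi t, g r ∂ν ∂μ =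
      ∫ r in Ioi s, (∫ t in Ioo s r, f t ∂μ) • g r ∂ν := by
  let F (t r : α) : E := {p : α × α | p.1 < p.2}.indicator (fun p => f p.1 • g p.2) (t, r)
  calc ∫ t in Ioi s, f t • ∫ r in Ioi t, g r ∂ν ∂μ
      = ∫ t in Ioi s, ∫ r in Ioi s, F t r ∂ν ∂μ := by
        refine setIntegral_congr_fun measurableSet_Ioi fun t ht => ?_
        change _ = ∫ r in Ioi s, (Ioi t).indicator (fun r => f t • g r) r ∂ν
        rw [setIntegral_indicator measurableSet_Ioi,
          inter_eq_right.mpr (Ioi_subset_Ioi (le_of_lt ht)), integral_smul]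
    _ = ∫ r in Ioi s, ∫ t in Ioi s, F t r ∂μ ∂ν :=
        integral_integral_swap (integrable_indicator_lt_smul_prod hfm hf hgm hfg)
    _ = ∫ r in Ioi s, (∫ t in Ioo s r, f t ∂μ) • g r ∂ν := by
        refine integral_congr_ae (.of_forall fun r => ?_)
        change ∫ t in Ioi s, (Iio r).indicator (fun t => f t • g r) t ∂μ = _
        rw [setIntegral_indicator measurableSet_Iio, Ioi_inter_Iio, integral_smul_const]

end Fubini

theorem integral_Ioi_deriv_smul_integral_Ioi {E : Type*} [NormedAddCommGroup E] [NormedSpace ℝ E]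
    [CompleteSpace E] {s : ℝ} {U f : ℝ → ℝ} {g : ℝ → E} (hU : ContinuousOn U (Ici s))
    (hderiv : ∀ t ∈ Ioi s, HasDerivAt U (f t) t) (hf : ∀ t ∈ Ioi s, 0 ≤ f t)
    (hg : IntegrableOn g (Ioi s)) (hUg : IntegrableOn (fun r => U r • g r) (Ioi s)) :
    ∫ t in Ioi s, f t • ∫ r in Ioi t, g r =
      (∫ r in Ioi s, U r • g r) - U s • ∫ r in Ioi s, g r := by
  have hfm : AEStronglyMeasurable f (volume.restrict (Ioi s)) :=
    (stronglyMeasurable_deriv U).aestronglyMeasurable.congr <|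
      ae_restrict_of_forall_mem measurableSet_Ioi fun t ht => (hderiv t ht).deriv
  have hfi (r : ℝ) : IntegrableOn f (Ioc s r) :=
    intervalIntegral.integrableOn_deriv_of_nonneg (hU.mono Icc_subset_Ici_self)
      (fun t ht => hderiv t ht.1) fun t ht => hf t ht.1
  have hprim (r : ℝ) (hr : r ∈ Ioi s) : ∫ t in Ioo s r, f t = U r - U s := by
    have hsr : s ≤ r := le_of_lt hr
    rw [← integral_Ioc_eq_integral_Ioo, ← intervalIntegral.integral_of_le hsr]
    exact intervalIntegral.integral_eq_sub_of_hasDerivAt_of_le hsr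
      (hU.mono Icc_subset_Ici_self) (fun t ht => hderiv t ht.1)
      ((intervalIntegrable_iff_integrableOn_Ioc_of_le hsr).mpr (hfi r))
  have hprim_norm (r : ℝ) (hr : r ∈ Ioi s) : ∫ t in Ioo s r, ‖f t‖ = U r - U s := by
    rw [← hprim r hr]
    exact setIntegral_congr_fun measurableSet_Ioo fun t ht => Real.norm_of_nonneg (hf t ht.1)
  have hfg : IntegrableOn (fun r => (∫ t in Ioo s r, ‖f t‖) • g r) (Ioi s) := by
    refine (hUg.sub (hg.smul (U s))).congr_fun (fun r hr => ?_) measurableSet_Ioi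
    simp only [hprim_norm r hr, sub_smul, Pi.sub_apply, Pi.smul_apply]
  calc ∫ t in Ioi s, f t • ∫ r in Ioi t, g r
      = ∫ r in Ioi s, (∫ t in Ioo s r, f t) • g r :=
        integral_Ioi_smul_integral_Ioi hfm (fun r _ => (hfi r).mono_set Ioo_subset_Ioc_self)
          hg.aestronglyMeasurable hfg
    _ = ∫ r in Ioi s, (U r • g r - U s • g r) :=
        setIntegral_congr_fun measurableSet_Ioi fun r hr => by
          simp only [hprim r hr, sub_smul]
    _ = (∫ r in Ioi s, U r • g r) - U s • ∫ r in Ioi s, g r := by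
        rw [← integral_smul]
        exact integral_sub hUg (hg.smul (U s))

theorem hasDerivAt_neg_one_add_sq_rpow_div {a : ℝ} (ha : a ≠ 0) (t : ℝ) :
    HasDerivAt (fun t : ℝ => -(1 + t ^ 2) ^ (-(a / 2)) / a) (t / (1 + t ^ 2) ^ (a / 2 + 1)) t := by
  have hpos : 0 < 1 + t ^ 2 := by positivity
  have hpow :=
    ((hasDerivAt_pow 2 t).const_add 1).rpow_const (p := -(a / 2)) (Or.inl hpos.ne')
  refine (hpow.neg.div_const a).congr_deriv ?_
  rw [show -(a / 2) - 1 = -(a / 2 + 1) by ring, Real.rpow_neg hpos.le]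
  push_cast
  field_simp

theorem one_add_sq_rpow_neg_mul_rpow_sub_one (b t : ℝ) :
    (1 + t ^ 2) ^ (-b) * (1 + t ^ 2) ^ (b - 1) = (1 + t ^ 2)⁻¹ := by
  rw [← Real.rpow_add (by positivity), neg_add_eq_sub, sub_sub_cancel_left, Real.rpow_neg_one]

theorem continuous_one_add_sq_rpow (b : ℝ) : Continuous fun t : ℝ => (1 + t ^ 2) ^ b :=
  Continuous.rpow_const (by fun_prop) fun t => Or.inl (by positivity)

theorem BddSupp.integrableOn_Ioi_mul {ζ w : ℝ → ℝ} {s : ℝ} (hb : BddSupp ζ)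
    (hζ : LocallyIntegrableOn ζ (Ici s)) (hw : ContinuousOn w (Ici s)) :
    IntegrableOn (fun t => w t * ζ t) (Ioi s) := by
  obtain ⟨R, hR⟩ := hb
  have hcompact : IntegrableOn (fun t => w t * ζ t) (Icc s R) :=
    (hζ.continuousOn_mul hw isClosed_Ici.isLocallyClosed).integrableOn_compact_subset
      Icc_subset_Ici_self isCompact_Icc
  refine hcompact.of_forall_sdiff_eq_zero measurableSet_Ioi fun t ht => ?_
  have hRt : R ≤ t := le_of_not_ge fun h => ht.2 ⟨le_of_lt ht.1, h⟩
  rw [hR t hRt, mul_zero]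

theorem stmt6_general {E : Type*} [NormedAddCommGroup E] [NormedSpace ℝ E] [CompleteSpace E]
    (ζ : ℝ → E) (a s : ℝ) (hs : 0 ≤ s)
    (hζ : IntegrableOn (fun r => (r * (1 + r ^ 2) ^ (a / 2 - 1)) • ζ r) (Ioi s))
    (hζ' : IntegrableOn (fun t => (t / (1 + t ^ 2)) • ζ t) (Ioi s)) :
    a ^ 2 • ∫ t in Ioi s, (t / (1 + t ^ 2) ^ (a / 2 + 1)) •
        ∫ r in Ioi t, (r * (1 + r ^ 2) ^ (a / 2 - 1)) • ζ r =
      (a * (1 + s ^ 2) ^ (-(a / 2))) • (∫ t in Ioi s, (t * (1 + t ^ 2) ^ (a / 2 - 1)) • ζ t) -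
        a • ∫ t in Ioi s, (t / (1 + t ^ 2)) • ζ t := by
  obtain rfl | ha := eq_or_ne a 0
  · simp
  have hU := hasDerivAt_neg_one_add_sq_rpow_div ha
  have hcollapse : (fun r : ℝ => (-(1 + r ^ 2) ^ (-(a / 2)) / a) •
      (r * (1 + r ^ 2) ^ (a / 2 - 1)) • ζ r) = fun r => (-a⁻¹) • (r / (1 + r ^ 2)) • ζ r := by
    funext r
    rw [smul_smul, smul_smul, div_eq_mul_inv r, ← one_add_sq_rpow_neg_mul_rpow_sub_one (a / 2)]
    ring_nf
  have hnonneg (t : ℝ) (ht : t ∈ Ioi s) : 0 ≤ t / (1 + t ^ 2) ^ (a / 2 + 1) :=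
    div_nonneg (hs.trans (le_of_lt ht)) (by positivity)
  rw [integral_Ioi_deriv_smul_integral_Ioi (fun t _ => (hU t).continuousAt.continuousWithinAt)
    (fun t _ => hU t) hnonneg hζ (hcollapse ▸ hζ'.smul (-a⁻¹)), hcollapse, integral_smul]
  match_scalars <;> field_simp

theorem stmt6 (ζ : ℝ → ℝ) (hc : ContinuousOn ζ (Set.Ioi 0)) (hb : BddSupp ζ)
    (l : ℕ) (hl : 1 ≤ l) (s : ℝ) (hs : 0 < s) :
    (l : ℝ) ^ 2 *
        ∫ t in Set.Ioi s, t / (1 + t ^ 2) ^ ((l : ℝ) / 2 + 1) *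
          ∫ r in Set.Ioi t, r * (1 + r ^ 2) ^ ((l : ℝ) / 2 - 1) * ζ r =
      (l : ℝ) * (1 + s ^ 2) ^ (-((l : ℝ) / 2)) *
          (∫ t in Set.Ioi s, t * (1 + t ^ 2) ^ ((l : ℝ) / 2 - 1) * ζ t) -
        (l : ℝ) * ∫ t in Set.Ioi s, t * ζ t / (1 + t ^ 2) := by
  have hζ : LocallyIntegrableOn ζ (Ici s) :=
    (hc.mono (Ici_subset_Ioi.mpr hs)).locallyIntegrableOn measurableSet_Ici
  have hpow := continuous_one_add_sq_rpow ((l : ℝ) / 2 - 1)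
  have hdiv : Continuous fun t : ℝ => t / (1 + t ^ 2) :=
    continuous_id.div (by fun_prop) fun t => by positivity
  simpa only [smul_eq_mul, mul_div_right_comm] using stmt6_general ζ l s hs.le
    (hb.integrableOn_Ioi_mul hζ (continuous_id.mul hpow).continuousOn)
    (hb.integrableOn_Ioi_mul hζ hdiv.continuousOn)
end

section
/- Let n ≥ 3 and let ξ : ℝ^n → ℝ^n be continuous with compact support. Then ξ satisfies ξ(ϑx) = ϑ ξ(x) for every ϑ ∈ SO(n) and every x ∈ ℝ^n \ {0}, if and only if there exists α ∈ T_n^n such that ξ(x) = α(|x|) x for every x ∈ ℝ^n \ {0}. -/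
open MeasureTheory Filter Set

/-! Let `w ⊥ x` be nonzero and, as `n ≥ 3`, pick a nonzero `u` orthogonal to both `x` and
`y = ξ x`. Reflecting in `uᗮ` and then in `wᗮ` is a rotation fixing `x`, hence fixing `y` by
equivariance; as the first reflection already fixes `y`, so does the second, i.e. `w ⊥ y`. Since
`w ⊥ x` was arbitrary, `ξ x` is a multiple of `x`, and by transitivity of rotations on spheres the
factor depends only on `‖x‖`. By continuity the argument also covers `x = 0`, so `ξ 0 = 0`, which
gives `s α(s) → 0` as `s → 0⁺`. -/

open Module (finrank)
open scoped Topology RealInnerProductSpace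

theorem exists_ne_zero_forall_inner_eq_zero {𝕜 E : Type*} [RCLike 𝕜] [NormedAddCommGroup E]
    [InnerProductSpace 𝕜 E] (s : Finset E) (hs : s.card < finrank 𝕜 E) :
    ∃ u : E, u ≠ 0 ∧ ∀ x ∈ s, inner 𝕜 u x = 0 := by
  have hspan : Submodule.span 𝕜 (s : Set E) ≠ ⊤ := fun htop => by
    have hle := finrank_span_finset_le_card (R := 𝕜) s
    rw [Set.finrank, htop, finrank_top] at hle
    exact hs.not_ge hle
  obtain ⟨u, hu, hu0⟩ := Submodule.exists_mem_ne_zero_of_ne_bot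
    (mt Submodule.orthogonal_eq_bot_iff.1 hspan)
  exact ⟨u, hu0, fun x hx => Submodule.inner_left_of_mem_orthogonal (Submodule.subset_span hx) hu⟩

section

variable {V : Type*} [NormedAddCommGroup V] [InnerProductSpace ℝ V]

theorem reflection_orthogonal_span_singleton_eq_self_iff {u x : V} :
    (ℝ ∙ u)ᗮ.reflection x = x ↔ ⟪u, x⟫ = 0 := by
  rw [Submodule.reflection_eq_self_iff, Submodule.mem_orthogonal_singleton_iff_inner_right]

/-- `IsRotation ϑ` says that the linear isometry `ϑ` belongs to `SO(V)`. It is meant for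
finite-dimensional `V`: otherwise `LinearMap.det` is `1` by convention. -/
def IsRotation (ϑ : V ≃ₗᵢ[ℝ] V) : Prop :=
  LinearMap.det (ϑ.toLinearEquiv : V →ₗ[ℝ] V) = 1

theorem isRotation_reflection_trans_reflection [FiniteDimensional ℝ V] {u v : V} (hu : u ≠ 0)
    (hv : v ≠ 0) : IsRotation ((ℝ ∙ u)ᗮ.reflection.trans (ℝ ∙ v)ᗮ.reflection) := by
  have det_eq_neg_one {w : V} (hw : w ≠ 0) :
      LinearMap.det ((ℝ ∙ w)ᗮ.reflection.toLinearEquiv : V →ₗ[ℝ] V) = -1 := by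
    refine (Submodule.det_reflection _).trans ?_
    rw [Submodule.orthogonal_orthogonal, finrank_span_singleton hw, pow_one]
  refine (LinearMap.det_comp ((ℝ ∙ v)ᗮ.reflection.toLinearEquiv : V →ₗ[ℝ] V)
    ((ℝ ∙ u)ᗮ.reflection.toLinearEquiv : V →ₗ[ℝ] V)).trans ?_
  rw [det_eq_neg_one hu, det_eq_neg_one hv, neg_one_mul, neg_neg]

theorem exists_isRotation_apply_eq (hV : 2 ≤ finrank ℝ V) {x y : V} (h : ‖x‖ = ‖y‖) :
    ∃ ϑ : V ≃ₗᵢ[ℝ] V, IsRotation ϑ ∧ ϑ x = y := by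
  have : FiniteDimensional ℝ V := Module.finite_of_finrank_pos (by lia)
  obtain rfl | hxy := eq_or_ne x y
  · exact ⟨.refl ℝ V, LinearMap.det_id, rfl⟩
  obtain ⟨u, hu, huy⟩ := exists_ne_zero_forall_inner_eq_zero (𝕜 := ℝ) {y}
    (by rw [Finset.card_singleton]; lia)
  refine ⟨_, isRotation_reflection_trans_reflection (sub_ne_zero.2 hxy) hu, ?_⟩
  rw [LinearIsometryEquiv.trans_apply, Submodule.reflection_sub h,
    reflection_orthogonal_span_singleton_eq_self_iff.2 (huy y (Finset.mem_singleton_self y))]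

theorem mem_span_singleton_of_forall_isRotation (hV : 3 ≤ finrank ℝ V) {x y : V}
    (h : ∀ ϑ : V ≃ₗᵢ[ℝ] V, IsRotation ϑ → ϑ x = x → ϑ y = y) : y ∈ ℝ ∙ x := by
  classical
  have : FiniteDimensional ℝ V := Module.finite_of_finrank_pos (by lia)
  obtain ⟨u, hu, huxy⟩ := exists_ne_zero_forall_inner_eq_zero (𝕜 := ℝ) {x, y}
    (Finset.card_le_two.trans_lt hV)
  have hux : (ℝ ∙ u)ᗮ.reflection x = x :=
    reflection_orthogonal_span_singleton_eq_self_iff.2 (huxy x (by simp))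
  have huy : (ℝ ∙ u)ᗮ.reflection y = y :=
    reflection_orthogonal_span_singleton_eq_self_iff.2 (huxy y (by simp))
  rw [← (ℝ ∙ x).orthogonal_orthogonal, Submodule.mem_orthogonal]
  intro w hwx
  obtain rfl | hw := eq_or_ne w 0
  · exact inner_zero_left y
  have hwx' : (ℝ ∙ w)ᗮ.reflection x = x :=
    reflection_orthogonal_span_singleton_eq_self_iff.2
      (Submodule.mem_orthogonal_singleton_iff_inner_left.1 hwx)
  have hfix := h _ (isRotation_reflection_trans_reflection hu hw)
    (by rw [LinearIsometryEquiv.trans_apply, hux, hwx'])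
  rw [LinearIsometryEquiv.trans_apply, huy] at hfix
  exact reflection_orthogonal_span_singleton_eq_self_iff.1 hfix

/-- `IsRotationEquivariant ξ` says that the vector field `ξ` commutes with the action of `SO(V)`
on all of `V`, the origin included. -/
def IsRotationEquivariant (ξ : V → V) : Prop :=
  ∀ ϑ : V ≃ₗᵢ[ℝ] V, IsRotation ϑ → ∀ x, ξ (ϑ x) = ϑ (ξ x)

/-- The candidate for `α` in `ξ x = α ‖x‖ • x`: the component of `ξ` along the ray spanned by the
unit vector `e`, divided by the radius. -/
noncomputable def radialProfile (ξ : V → V) (e : V) (s : ℝ) : ℝ := ⟪e, ξ (s • e)⟫ / s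

variable {ξ : V → V}

namespace IsRotationEquivariant

theorem of_forall_ne_zero [Nontrivial V] (hξ : Continuous ξ)
    (h : ∀ ϑ : V ≃ₗᵢ[ℝ] V, IsRotation ϑ → ∀ x, x ≠ 0 → ξ (ϑ x) = ϑ (ξ x)) :
    IsRotationEquivariant ξ := by
  intro ϑ hϑ
  have : (𝓝[≠] (0 : V)).NeBot := Module.punctured_nhds_neBot ℝ V 0
  exact congrFun <| Continuous.ext_on (dense_compl_singleton (0 : V)) (by fun_prop) (by fun_prop)
    fun x hx => h ϑ hϑ x hx

theorem apply_mem_span_singleton (hξ : IsRotationEquivariant ξ) (hV : 3 ≤ finrank ℝ V) (x : V) :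
    ξ x ∈ ℝ ∙ x :=
  mem_span_singleton_of_forall_isRotation hV fun ϑ hϑ hfix => by rw [← hξ ϑ hϑ, hfix]

theorem map_zero (hξ : IsRotationEquivariant ξ) (hV : 3 ≤ finrank ℝ V) : ξ 0 = 0 := by
  simpa using hξ.apply_mem_span_singleton hV 0

theorem eq_radialProfile_smul (hξ : IsRotationEquivariant ξ) (hV : 3 ≤ finrank ℝ V) {e : V}
    (he : ‖e‖ = 1) (x : V) : ξ x = radialProfile ξ e ‖x‖ • x := by
  obtain rfl | hx := eq_or_ne x 0
  · rw [hξ.map_zero hV, smul_zero]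
  obtain ⟨c, hc⟩ := Submodule.mem_span_singleton.1 (hξ.apply_mem_span_singleton hV (‖x‖ • e))
  have hprofile : radialProfile ξ e ‖x‖ = c := by
    rw [radialProfile, ← hc, inner_smul_right, inner_smul_right, real_inner_self_eq_norm_sq, he,
      one_pow, mul_one, mul_div_cancel_right₀ c (norm_ne_zero_iff.2 hx)]
  obtain ⟨ϑ, hϑ, hϑx⟩ := exists_isRotation_apply_eq (by lia : 2 ≤ finrank ℝ V)
    (show ‖‖x‖ • e‖ = ‖x‖ by rw [norm_smul, norm_norm, he, mul_one])
  calc ξ x = ϑ (ξ (‖x‖ • e)) := by rw [← hξ ϑ hϑ, hϑx]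
    _ = c • x := by rw [← hc, map_smul, hϑx]
    _ = radialProfile ξ e ‖x‖ • x := by rw [hprofile]

end IsRotationEquivariant

theorem continuousOn_radialProfile (hξ : Continuous ξ) (e : V) :
    ContinuousOn (radialProfile ξ e) (Ioi 0) :=
  ContinuousOn.div (by fun_prop) continuousOn_id fun _ hs => (mem_Ioi.1 hs).ne'

theorem bddSupp_radialProfile (hξ : HasCompactSupport ξ) {e : V} (he : ‖e‖ = 1) :
    BddSupp (radialProfile ξ e) := by
  obtain ⟨R, -, hR⟩ := hξ.isCompact.isBounded.exists_pos_norm_lt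
  refine ⟨R, fun s hs => ?_⟩
  have hnorm : R ≤ ‖s • e‖ := by
    rw [norm_smul, he, mul_one]
    exact hs.trans (Real.le_norm_self s)
  have hzero : ξ (s • e) = 0 := image_eq_zero_of_notMem_tsupport fun hmem =>
    (hR _ hmem).not_ge hnorm
  rw [radialProfile, hzero, inner_zero_right, zero_div]

theorem tendsto_mul_radialProfile (hξ : Continuous ξ) (h0 : ξ 0 = 0) (e : V) :
    Tendsto (fun s => s * radialProfile ξ e s) (𝓝[>] 0) (𝓝 0) := by
  have hinner : Tendsto (fun s : ℝ => ⟪e, ξ (s • e)⟫) (𝓝[>] 0) (𝓝 0) := by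
    have hcont : Continuous fun s : ℝ => ⟪e, ξ (s • e)⟫ := by fun_prop
    refine (hcont.tendsto' 0 0 ?_).mono_left nhdsWithin_le_nhds
    rw [zero_smul, h0, inner_zero_right]
  refine hinner.congr' ?_
  filter_upwards [self_mem_nhdsWithin] with s hs
  rw [radialProfile, mul_div_cancel₀ _ (mem_Ioi.1 hs).ne']

theorem memT_radialProfile (n : ℕ) (hξ : Continuous ξ) (hs : HasCompactSupport ξ) (h0 : ξ 0 = 0)
    {e : V} (he : ‖e‖ = 1) : MemT n n (radialProfile ξ e) := by
  refine ⟨continuousOn_radialProfile hξ e, bddSupp_radialProfile hs he, ?_⟩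
  simpa only [Nat.sub_self, zero_add, pow_one] using tendsto_mul_radialProfile hξ h0 e

theorem stmt9_general (hV : 3 ≤ finrank ℝ V) (hc : Continuous ξ) (hs : HasCompactSupport ξ) :
    (∀ ϑ : V ≃ₗᵢ[ℝ] V, IsRotation ϑ → ∀ x : V, x ≠ 0 → ξ (ϑ x) = ϑ (ξ x)) ↔
      ∃ α : ℝ → ℝ, MemT (finrank ℝ V) (finrank ℝ V) α ∧ ∀ x : V, x ≠ 0 → ξ x = α ‖x‖ • x := by
  constructor
  · intro h
    have : Nontrivial V := Module.nontrivial_of_finrank_pos (R := ℝ) (by lia)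
    obtain ⟨e, he⟩ := exists_norm_eq V zero_le_one
    have hξ : IsRotationEquivariant ξ := .of_forall_ne_zero hc h
    exact ⟨radialProfile ξ e, memT_radialProfile _ hc hs (hξ.map_zero hV) he,
      fun x _ => hξ.eq_radialProfile_smul hV he x⟩
  · rintro ⟨α, -, hα⟩ ϑ - x hx
    rw [hα x hx, hα (ϑ x) (ϑ.map_ne_zero_iff.2 hx), ϑ.norm_map, map_smul]

end

/-- For `n ≥ 3`, a continuous `ξ : ℝⁿ → ℝⁿ` with compact support commutes with all
rotations (linear isometries of determinant one) on `ℝⁿ \ {0}` if and only if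
`ξ(x) = α(|x|) x` for some `α ∈ T_n^n`. -/
theorem stmt9 (n : ℕ) (hn : 3 ≤ n)
    (ξ : EuclideanSpace ℝ (Fin n) → EuclideanSpace ℝ (Fin n))
    (hc : Continuous ξ) (hs : HasCompactSupport ξ) :
    (∀ ϑ : EuclideanSpace ℝ (Fin n) ≃ₗᵢ[ℝ] EuclideanSpace ℝ (Fin n),
        LinearMap.det (ϑ.toLinearEquiv :
          EuclideanSpace ℝ (Fin n) →ₗ[ℝ] EuclideanSpace ℝ (Fin n)) = 1 →
        ∀ x : EuclideanSpace ℝ (Fin n), x ≠ 0 → ξ (ϑ x) = ϑ (ξ x)) ↔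
      ∃ α : ℝ → ℝ, MemT n n α ∧
        ∀ x : EuclideanSpace ℝ (Fin n), x ≠ 0 → ξ x = α ‖x‖ • x := by
  simpa only [IsRotation, finrank_euclideanSpace_fin] using
    stmt9_general (hn.trans_eq finrank_euclideanSpace_fin.symm) hc hs
end

section
/- Let ψ̃ : ℝ → ℝ be infinitely differentiable with compact support, and set ξ(t) = ψ̃(t²). Then there exists an infinitely differentiable function ψ : ℝ → ℝ with compact support such that for every s > 0: −(1/π) ∫_s^∞ ξ′(t)/√(t²−s²) dt = ψ(s²), where ξ′(t) = 2t ψ̃′(t²). Equivalently, −(2/π) ∫_0^∞ ψ̃′(s²+r²) dr = ψ(s²) for every s > 0. -/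
open MeasureTheory Filter Set

/-! The substitution `t = √(s² + r²)` removes the singularity of the inverse Abel kernel and turns
the transform of `t ↦ f (t²)` at `s` into `-(2/π) ∫_0^∞ f' (u + r²) dr` with `u = s²`. Where `u` is
bounded below and `f'` vanishes near `+∞`, the integrand in `u` vanishes for `r` outside a fixed
compact set, so this expression is smooth in `u`, and it is zero for large `u`. For negative `u` it
need not be compactly supported, but only its values on `[0, ∞)` matter, so a smooth cutoff on the
negative half-line finishes the proof. -/

section InverseAbelTransform

variable {E : Type*} [NormedAddCommGroup E] [NormedSpace ℝ E]

/-- The inverse Abel transform of `ξ`, for vector-valued `ξ`; the kernel `1 / √(t² - s²)` acts by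
scalar multiplication. -/
noncomputable def inverseAbelTransform (ξ : ℝ → E) (s : ℝ) : E :=
  -(1 / Real.pi) • ∫ t in Ioi s, (√(t ^ 2 - s ^ 2))⁻¹ • deriv ξ t

theorem contDiffOn_integral_of_compact_support {P G : Type*} [NormedAddCommGroup P]
    [NormedSpace ℝ P] [NormedAddCommGroup G] [NormedSpace ℝ G] [MeasurableSpace G] [BorelSpace G]
    {n : ℕ∞} {μ : Measure G} [IsLocallyFiniteMeasure μ] {F : P → G → E} {s : Set P} {k : Set G}
    (hs : IsOpen s) (hk : IsCompact k) (hFk : ∀ p ∈ s, ∀ x ∉ k, F p x = 0)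
    (hF : ContDiffOn ℝ n (Function.uncurry F) (s ×ˢ univ)) :
    ContDiffOn ℝ n (fun p => ∫ x, F p x ∂μ) s := by
  -- The integral is the value at `0` of the convolution of `1` with `x ↦ F p (-x)`.
  have hFneg : ContDiffOn ℝ n (fun q : P × G => F q.1 (-q.2)) (s ×ˢ univ) :=
    hF.comp (contDiff_fst.prodMk contDiff_snd.neg).contDiffOn fun q hq => ⟨hq.1, mem_univ _⟩
  have hconv := contDiffOn_convolution_right_with_param_comp (μ := μ)
    (ContinuousLinearMap.lsmul ℝ ℝ) (v := fun _ => (0 : G)) (f := fun _ => (1 : ℝ))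
    contDiffOn_const hs hk.neg (fun p x hp hx => hFk p hp (-x) (by simpa using hx))
    (locallyIntegrable_const 1) hFneg
  simpa [convolution_def] using hconv

theorem contDiffOn_integral_Ioi_comp_add_sq {n : ℕ∞} {g : ℝ → E} {a b : ℝ}
    (hg : ContDiffOn ℝ n g (Ioi a)) (hzero : ∀ x ≥ b, g x = 0) :
    ContDiffOn ℝ n (fun u => ∫ r in Ioi (0 : ℝ), g (u + r ^ 2)) (Ioi a) := by
  refine contDiffOn_integral_of_compact_support isOpen_Ioi
    (isCompact_Icc (a := -√(b - a)) (b := √(b - a))) (fun u hu r hr => hzero _ ?_) ?_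
  · have hr' : √(b - a) < |r| := not_le.1 fun h => hr (abs_le.1 h)
    have hsq : b - a < r ^ 2 := sq_abs r ▸ Real.lt_sq_of_sqrt_lt hr'
    linarith [mem_Ioi.1 hu]
  · exact hg.comp (by fun_prop) fun q hq =>
      lt_add_of_lt_of_nonneg (mem_Ioi.1 hq.1) (sq_nonneg q.2)

theorem image_sqrt_sq_add_sq_Ioi {s : ℝ} (hs : 0 ≤ s) :
    (fun r => √(s ^ 2 + r ^ 2)) '' Ioi 0 = Ioi s := by
  ext t
  constructor
  · rintro ⟨r, hr, rfl⟩
    exact Real.lt_sqrt_of_sq_lt (lt_add_of_pos_right _ (pow_pos hr 2))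
  · intro (ht : s < t)
    have hpos : 0 < t ^ 2 - s ^ 2 := sub_pos.2 (by gcongr)
    refine ⟨√(t ^ 2 - s ^ 2), Real.sqrt_pos.2 hpos, ?_⟩
    simp only [Real.sq_sqrt hpos.le, add_sub_cancel, Real.sqrt_sq (hs.trans ht.le)]

theorem integral_Ioi_eq_integral_comp_sqrt_sq_add_sq (g : ℝ → E) {s : ℝ} (hs : 0 ≤ s) :
    ∫ t in Ioi s, g t =
      ∫ r in Ioi (0 : ℝ), (r / √(s ^ 2 + r ^ 2)) • g (√(s ^ 2 + r ^ 2)) := by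
  have hderiv : ∀ r ∈ Ioi (0 : ℝ), HasDerivWithinAt (fun r => √(s ^ 2 + r ^ 2))
      (r / √(s ^ 2 + r ^ 2)) (Ioi 0) r := by
    intro r (hr : 0 < r)
    have h := ((hasDerivAt_pow 2 r).const_add (s ^ 2)).sqrt (by positivity)
    simpa [mul_div_mul_left] using h.hasDerivWithinAt
  have hmono : MonotoneOn (fun r => √(s ^ 2 + r ^ 2)) (Ioi 0) := by
    intro a (ha : 0 < a) b _ hab
    dsimp only
    gcongr
  rw [← image_sqrt_sq_add_sq_Ioi hs,
    integral_image_eq_integral_deriv_smul_of_monotoneOn measurableSet_Ioi hderiv hmono]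

theorem inverseAbelTransform_comp_sq {f : ℝ → E} {s : ℝ} (hs : 0 ≤ s)
    (hf : ∀ x > s ^ 2, DifferentiableAt ℝ f x) :
    inverseAbelTransform (fun t => f (t ^ 2)) s =
      -(2 / Real.pi) • ∫ r in Ioi (0 : ℝ), deriv f (s ^ 2 + r ^ 2) := by
  have hintegrand : ∀ r ∈ Ioi (0 : ℝ), (r / √(s ^ 2 + r ^ 2)) •
      ((√(√(s ^ 2 + r ^ 2) ^ 2 - s ^ 2))⁻¹ • deriv (fun t => f (t ^ 2)) √(s ^ 2 + r ^ 2)) =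
        (2 : ℝ) • deriv f (s ^ 2 + r ^ 2) := by
    intro r (hr : 0 < r)
    have hsq : √(s ^ 2 + r ^ 2) ^ 2 = s ^ 2 + r ^ 2 := Real.sq_sqrt (by positivity)
    have hroot : √(s ^ 2 + r ^ 2) ≠ 0 := by positivity
    have hchain : deriv (fun t => f (t ^ 2)) √(s ^ 2 + r ^ 2) =
        (2 * √(s ^ 2 + r ^ 2)) • deriv f (s ^ 2 + r ^ 2) := by
      have hfd := (hf (s ^ 2 + r ^ 2) (lt_add_of_pos_right _ (by positivity))).hasDerivAt
      have hcomp := hfd.scomp_of_eq _ (hasDerivAt_pow 2 √(s ^ 2 + r ^ 2)) hsq.symm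
      simpa [Function.comp_def] using hcomp.deriv
    rw [hchain, hsq, add_sub_cancel_left, Real.sqrt_sq hr.le, smul_smul, smul_smul]
    congr 1
    field_simp
  rw [inverseAbelTransform, integral_Ioi_eq_integral_comp_sqrt_sq_add_sq _ hs,
    setIntegral_congr_fun measurableSet_Ioi hintegrand, integral_smul, smul_smul]
  congr 1
  ring

theorem exists_contDiff_eqOn_Iic_zero_eqOn_Ici_one {a b : ℝ} (hab : a < b) (n : ℕ∞) :
    ∃ χ : ℝ → ℝ, ContDiff ℝ n χ ∧ EqOn χ 0 (Iic a) ∧ EqOn χ 1 (Ici b) := by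
  have hba : 0 < b - a := sub_pos.2 hab
  refine ⟨fun x => Real.smoothTransition ((x - a) / (b - a)),
    Real.smoothTransition.contDiff.comp (by fun_prop), fun x hx => ?_, fun x hx => ?_⟩
  · exact Real.smoothTransition.zero_of_nonpos
      (div_nonpos_of_nonpos_of_nonneg (sub_nonpos.2 hx) hba.le)
  · exact Real.smoothTransition.one_of_one_le ((one_le_div hba).2 (sub_le_sub_right hx a))

theorem exists_contDiff_hasCompactSupport_eqOn_Ici {n : ℕ∞} {f : ℝ → E} {a b c : ℝ}
    (hac : a < c) (hf : ContDiffOn ℝ n f (Ioi a)) (hzero : ∀ x ≥ b, f x = 0) :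
    ∃ g : ℝ → E, ContDiff ℝ n g ∧ HasCompactSupport g ∧ EqOn g f (Ici c) := by
  obtain ⟨m, ham, hmc⟩ := exists_between hac
  obtain ⟨χ, hχ, hχ_zero, hχ_one⟩ := exists_contDiff_eqOn_Iic_zero_eqOn_Ici_one hmc n
  have hleft : ∀ x ≤ m, χ x • f x = 0 := fun x hx => by
    rw [hχ_zero hx, Pi.zero_apply, zero_smul]
  refine ⟨fun x => χ x • f x, contDiff_iff_contDiffAt.2 fun x => ?_, ?_, fun x hx => ?_⟩
  · rcases lt_or_ge a x with hax | hxa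
    · exact hχ.contDiffAt.smul (hf.contDiffAt (Ioi_mem_nhds hax))
    · refine (contDiffAt_const (c := (0 : E))).congr_of_eventuallyEq ?_
      filter_upwards [Iio_mem_nhds (hxa.trans_lt ham)] with y hy using hleft y (le_of_lt hy)
  · refine HasCompactSupport.intro (isCompact_Icc (a := m) (b := b)) fun x hx => ?_
    rcases le_or_gt x m with hxm | hmx
    · exact hleft x hxm
    · rw [hzero x (not_lt.1 fun hxb => hx ⟨hmx.le, hxb.le⟩), smul_zero]
  · simp only [hχ_one hx, Pi.one_apply, one_smul]

theorem stmt11_general [CompleteSpace E] {n : ℕ∞} {f : ℝ → E} {a : ℝ} (ha : a < 0)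
    (hf : ContDiffOn ℝ (n + 1) f (Ioi a)) (hzero : deriv f =ᶠ[atTop] 0) :
    ∃ ψ : ℝ → E, ContDiff ℝ n ψ ∧ HasCompactSupport ψ ∧
      (∀ s ≥ 0, inverseAbelTransform (fun t => f (t ^ 2)) s = ψ (s ^ 2)) ∧
      ∀ s : ℝ, -(2 / Real.pi) • ∫ r in Ioi (0 : ℝ), deriv f (s ^ 2 + r ^ 2) = ψ (s ^ 2) := by
  obtain ⟨b, hb⟩ := eventually_atTop.1 hzero
  obtain ⟨hdiff, -, hderiv⟩ := (contDiffOn_succ_iff_deriv_of_isOpen isOpen_Ioi).1 hf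
  have hsmooth := (contDiffOn_integral_Ioi_comp_add_sq hderiv hb).const_smul
    (-(2 / Real.pi))
  obtain ⟨ψ, hψ, hsupp, heq⟩ := exists_contDiff_hasCompactSupport_eqOn_Ici ha hsmooth
    (b := b) fun u hu => by
      have hvanish : ∀ r : ℝ, deriv f (u + r ^ 2) = 0 := fun r =>
        hb _ (le_add_of_le_of_nonneg hu (sq_nonneg r))
      simp [hvanish]
  have hval : ∀ s : ℝ, -(2 / Real.pi) • ∫ r in Ioi (0 : ℝ), deriv f (s ^ 2 + r ^ 2) = ψ (s ^ 2) :=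
    fun s => (heq (sq_nonneg s)).symm
  refine ⟨ψ, hψ, hsupp, fun s hs => ?_, hval⟩
  rw [← hval s]
  exact inverseAbelTransform_comp_sq hs fun x hx =>
    hdiff.differentiableAt (Ioi_mem_nhds ((ha.trans_le (sq_nonneg s)).trans hx))

end InverseAbelTransform

theorem eventuallyEq_zero_atTop_of_hasCompactSupport {X M : Type*} [LinearOrder X]
    [NoMaxOrder X] [TopologicalSpace X] [OrderClosedTopology X] [Zero M] {f : X → M}
    (hf : HasCompactSupport f) : f =ᶠ[atTop] 0 :=
  (hasCompactSupport_iff_eventuallyEq.1 hf).filter_mono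
    (coclosedCompact_eq_cocompact (X := X) ▸ atTop_le_cocompact)

/-- If `ψ̃` is smooth with compact support and `ξ(t) = ψ̃(t²)`, then the inverse Abel
transform of `ξ` is of the form `s ↦ ψ(s²)` for a smooth, compactly supported `ψ`. -/
theorem stmt11 (ψt : ℝ → ℝ) (hψt : ContDiff ℝ (⊤ : ℕ∞) ψt) (hsupp : HasCompactSupport ψt) :
    ∃ ψ : ℝ → ℝ, ContDiff ℝ (⊤ : ℕ∞) ψ ∧ HasCompactSupport ψ ∧
      (∀ s > (0:ℝ),
        -(1 / Real.pi) *
            ∫ t in Set.Ioi s, deriv (fun r => ψt (r ^ 2)) t / Real.sqrt (t ^ 2 - s ^ 2) =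
          ψ (s ^ 2)) ∧
      (∀ s > (0:ℝ),
        -(2 / Real.pi) * ∫ r in Set.Ioi (0:ℝ), deriv ψt (s ^ 2 + r ^ 2) = ψ (s ^ 2)) := by
  obtain ⟨ψ, hψ, hc, habel, hval⟩ := stmt11_general (n := ⊤) neg_one_lt_zero hψt.contDiffOn
    (eventuallyEq_zero_atTop_of_hasCompactSupport hsupp.deriv)
  exact ⟨ψ, hψ, hc, fun s hs => by
    simpa [inverseAbelTransform, div_eq_inv_mul] using habel s hs.le, fun s _ => hval s⟩
end

section
/- Let n ≥ 1, i ∈ {1,…,n}, and let α ∈ T_n^n, i.e. α : (0,∞) → ℝ is continuous with bounded support and lim_{s→0⁺} s α(s) = 0. Define ξ : ℝ^n → ℝ by ξ(x) = α(|x|) x_i for x ≠ 0 and ξ(0) = 0. Then ξ is infinitely differentiable on ℝ^n if and only if there exists an infinitely differentiable function ψ : ℝ → ℝ with compact support such that α(s) = ψ(s²) for every s > 0. -/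
open MeasureTheory Filter Set

/-!
Restricted to a line, smoothness of `x ↦ α ‖x‖ • L x` makes the odd function `f t = α |t| * t`
smooth. By Hadamard's lemma `g t = f t / t` extends to a smooth even function with
`g s = α s` for `s > 0`, and Whitney's theorem writes an even function as `g t = ψ (t ^ 2)`.

For Whitney's theorem, `u ↦ g √u` has derivative `h √u` on `[0, ∞)`, where `h t = g' t / (2 t)` is
again smooth and even by Hadamard's lemma; so, inductively, `u ↦ g √u` is smooth up to the endpoint.
It extends to the whole line: Borel's lemma provides a smooth function with the same derivatives
at `0`, and the difference, being flat at `0`, extends by zero.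
-/

open scoped Topology ContDiff

variable {E F : Type*} [NormedAddCommGroup E] [NormedSpace ℝ E]
  [NormedAddCommGroup F] [NormedSpace ℝ F]

section Hadamard

theorem hasDerivAt_intervalIntegral_of_contDiff {f : ℝ × ℝ → E} (hf : ContDiff ℝ 1 f)
    (a b x : ℝ) :
    HasDerivAt (fun x => ∫ s in a..b, f (x, s)) (∫ s in a..b, fderiv ℝ f (x, s) (1, 0)) x := by
  have hf' : Continuous fun q : ℝ × ℝ => fderiv ℝ f q (1, 0) :=
    (hf.continuous_fderiv one_ne_zero).clm_apply continuous_const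
  have hfc : Continuous f := hf.continuous
  obtain ⟨C, hC⟩ := ((isCompact_Icc (a := x - 1) (b := x + 1)).prod
    (isCompact_uIcc (a := a) (b := b))).exists_bound_of_continuousOn hf'.continuousOn
  refine (intervalIntegral.hasDerivAt_integral_of_dominated_loc_of_deriv_le
    (F := fun x s => f (x, s)) (F' := fun x s => fderiv ℝ f (x, s) (1, 0)) (bound := fun _ => C)
    (Icc_mem_nhds (sub_one_lt x) (lt_add_one x))
    (Eventually.of_forall fun y => Continuous.aestronglyMeasurable (by fun_prop))
    (Continuous.intervalIntegrable (by fun_prop) _ _)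
    (Continuous.aestronglyMeasurable (by fun_prop))
    (Eventually.of_forall fun s hs y hy => hC (y, s) ⟨hy, uIoc_subset_uIcc hs⟩)
    intervalIntegrable_const (Eventually.of_forall fun s _ y _ => ?_)).2
  exact (hf.differentiable one_ne_zero (y, s)).hasFDerivAt.comp_hasDerivAt y
    ((hasDerivAt_id y).prodMk (hasDerivAt_const y s))

theorem contDiff_intervalIntegral {n : ℕ} {f : ℝ × ℝ → E} (hf : ContDiff ℝ n f) (a b : ℝ) :
    ContDiff ℝ n fun x => ∫ s in a..b, f (x, s) := by
  induction n generalizing f with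
  | zero =>
    exact contDiff_zero.2 (intervalIntegral.continuous_parametric_intervalIntegral_of_continuous'
      (f := fun x s => f (x, s)) hf.continuous a b)
  | succ n ih =>
    have hderiv := hasDerivAt_intervalIntegral_of_contDiff (hf.of_le (by simp)) a b
    refine (contDiff_succ_iff_deriv (n := n)).2
      ⟨fun x => (hderiv x).differentiableAt, by simp, ?_⟩
    rw [funext fun x => (hderiv x).deriv]
    exact ih ((hf.fderiv_right le_rfl).clm_apply contDiff_const)

theorem dslope_eq_integral_deriv [CompleteSpace E] {f : ℝ → E} (hf : ContDiff ℝ 1 f) (c t : ℝ) :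
    dslope f c t = ∫ s in (0 : ℝ)..1, deriv f (c + (t - c) * s) := by
  rcases eq_or_ne t c with rfl | ht
  · simp
  · rw [dslope_of_ne _ ht, slope_def_module,
      intervalIntegral.integral_comp_add_mul _ (sub_ne_zero.2 ht),
      intervalIntegral.integral_deriv_eq_sub (fun x _ => hf.differentiable one_ne_zero x)
        ((hf.continuous_deriv le_rfl).intervalIntegrable _ _)]
    simp

theorem contDiff_dslope [CompleteSpace E] {n : ℕ} {f : ℝ → E} (hf : ContDiff ℝ (n + 1) f)
    (c : ℝ) : ContDiff ℝ n (dslope f c) := by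
  rw [funext (dslope_eq_integral_deriv (hf.of_le (by simp)) c)]
  have hline : ContDiff ℝ n fun q : ℝ × ℝ => c + (q.1 - c) * q.2 := by fun_prop
  exact contDiff_intervalIntegral ((contDiff_succ_iff_deriv.1 hf).2.2.comp hline) 0 1

end Hadamard

section Borel

theorem exists_contDiff_hasCompactSupport_iteratedDeriv_zero (k : ℕ) :
    ∃ φ : ℝ → ℝ, ContDiff ℝ ∞ φ ∧ HasCompactSupport φ ∧
      ∀ j, iteratedDeriv j φ 0 = if j = k then 1 else 0 := by
  let χ : ContDiffBump (0 : ℝ) := ⟨1, 2, one_pos, one_lt_two⟩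
  refine ⟨fun x => (k.factorial : ℝ)⁻¹ * x ^ k * χ x,
    (contDiff_const.mul (contDiff_id.pow k)).mul χ.contDiff, χ.hasCompactSupport.mul_left,
    fun j => ?_⟩
  have hmonomial : (fun x => (k.factorial : ℝ)⁻¹ * x ^ k * χ x) =ᶠ[𝓝 0]
      fun x => (k.factorial : ℝ)⁻¹ * x ^ k := by
    filter_upwards [χ.eventuallyEq_one] with x hx
    simp [hx]
  rw [hmonomial.iteratedDeriv_eq, iteratedDeriv_const_mul_field, iteratedDeriv_fun_pow_zero]
  split_ifs with hjk
  · exact inv_mul_cancel₀ (Nat.cast_ne_zero.2 k.factorial_ne_zero)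
  · rw [Nat.cast_zero, mul_zero]

theorem exists_norm_iteratedDeriv_le {φ : ℝ → E} {j : ℕ} (hφ : ContDiff ℝ j φ)
    (hc : HasCompactSupport φ) : ∃ C, ∀ x, ‖iteratedDeriv j φ x‖ ≤ C := by
  obtain ⟨C, hC⟩ := (hc.iteratedFDeriv (𝕜 := ℝ) j).exists_bound_of_continuous
    (hφ.continuous_iteratedFDeriv le_rfl)
  exact ⟨C, fun x => norm_iteratedFDeriv_eq_norm_iteratedDeriv (𝕜 := ℝ) (f := φ) ▸ hC x⟩

theorem iteratedDeriv_comp_mul_sub_smul_const {φ : ℝ → ℝ} {j : ℕ} (hφ : ContDiff ℝ j φ)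
    (l c x : ℝ) (v : E) :
    iteratedDeriv j (fun x => φ (l * (x - c)) • v) x =
      (l ^ j * iteratedDeriv j φ (l * (x - c))) • v := by
  rw [iteratedDeriv_smul_const (by fun_prop),
    iteratedDeriv_comp_sub_const (f := fun x => φ (l * x)), iteratedDeriv_comp_const_mul hφ]

-- The function is a rescaled bump `(φ (l * (x - c)) / l ^ k) • v`: its `j`-th derivative carries
-- the factor `l ^ j / l ^ k`, which tends to zero as `l → ∞` when `j < k`.
theorem exists_contDiff_iteratedDeriv_eq_ite (c : ℝ) (k : ℕ) (v : E) {ε : ℝ} (hε : 0 < ε) :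
    ∃ f : ℝ → E, ContDiff ℝ ∞ f ∧ (∀ j, iteratedDeriv j f c = if j = k then v else 0) ∧
      (∀ j, ∃ C, ∀ x, ‖iteratedDeriv j f x‖ ≤ C) ∧ ∀ j < k, ∀ x, ‖iteratedDeriv j f x‖ ≤ ε := by
  obtain ⟨φ, hφ, hφc, hφ0⟩ := exists_contDiff_hasCompactSupport_iteratedDeriv_zero k
  choose C hC using fun j => exists_norm_iteratedDeriv_le (contDiff_infty.1 hφ j) hφc
  have hsmall : ∀ j < k, ∀ᶠ l : ℝ in atTop, l ^ j / l ^ k * (C j * ‖v‖) ≤ ε := fun j hj => by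
    have h := (tendsto_pow_div_pow_atTop_zero (𝕜 := ℝ) hj).mul_const (C j * ‖v‖)
    rw [zero_mul] at h
    exact h.eventually_le_const hε
  obtain ⟨l, hl, hl0⟩ : ∃ l : ℝ, (∀ j < k, l ^ j / l ^ k * (C j * ‖v‖) ≤ ε) ∧ 0 < l :=
    (((eventually_all_finite (finite_lt_nat k)).2 hsmall).and (eventually_gt_atTop 0)).exists
  have hderiv : ∀ j x, iteratedDeriv j (fun x => φ (l * (x - c)) • (l ^ k)⁻¹ • v) x =
      (l ^ j / l ^ k * iteratedDeriv j φ (l * (x - c))) • v := fun j x => by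
    rw [iteratedDeriv_comp_mul_sub_smul_const (contDiff_infty.1 hφ j), smul_smul]
    ring_nf
  have hnorm : ∀ j x, ‖iteratedDeriv j (fun x => φ (l * (x - c)) • (l ^ k)⁻¹ • v) x‖ ≤
      l ^ j / l ^ k * (C j * ‖v‖) := fun j x => by
    rw [hderiv, norm_smul, norm_mul, Real.norm_of_nonneg (by positivity : 0 ≤ l ^ j / l ^ k),
      mul_assoc]
    gcongr
    exact hC j _
  refine ⟨fun x => φ (l * (x - c)) • (l ^ k)⁻¹ • v, by fun_prop, fun j => ?_,
    fun j => ⟨_, hnorm j⟩, fun j hj x => (hnorm j x).trans (hl j hj)⟩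
  rw [hderiv, sub_self, mul_zero, hφ0]
  split_ifs with hjk
  · rw [hjk, div_self (by positivity), one_mul, one_smul]
  · rw [mul_zero, zero_smul]

theorem iteratedDeriv_tsum_apply {ι : Type*} [CompleteSpace E] {N : ℕ∞} {f : ι → ℝ → E}
    {v : ℕ → ι → ℝ} (hf : ∀ i, ContDiff ℝ N (f i)) (hv : ∀ j : ℕ, j ≤ N → Summable (v j))
    (hfv : ∀ (j : ℕ) i x, j ≤ N → ‖iteratedDeriv j (f i) x‖ ≤ v j i) {j : ℕ} (hj : j ≤ N)
    (x : ℝ) : iteratedDeriv j (fun x => ∑' i, f i x) x = ∑' i, iteratedDeriv j (f i) x := by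
  simp only [← norm_iteratedFDeriv_eq_norm_iteratedDeriv] at hfv
  have hsum : Summable fun i => iteratedFDeriv ℝ j (f i) x :=
    (hv j hj).of_norm_bounded fun i => hfv j i x hj
  simp only [iteratedDeriv_eq_iteratedFDeriv]
  rw [iteratedFDeriv_tsum_apply hf hv hfv hj x]
  exact (ContinuousMultilinearMap.hasSum_eval hsum.hasSum _).tsum_eq.symm

theorem exists_contDiff_iteratedDeriv_eq [CompleteSpace E] (c : ℝ) (a : ℕ → E) :
    ∃ f : ℝ → E, ContDiff ℝ ∞ f ∧ ∀ j, iteratedDeriv j f c = a j := by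
  choose f hf hfc hbound hsmall using fun k =>
    exists_contDiff_iteratedDeriv_eq_ite c k (a k) (pow_pos (one_half_pos (α := ℝ)) k)
  choose C hC using hbound
  let v : ℕ → ℕ → ℝ := fun j k => if j < k then (1 / 2) ^ k else C k j
  have hfv : ∀ j k x, ‖iteratedDeriv j (f k) x‖ ≤ v j k := fun j k x => by
    by_cases hjk : j < k
    · simpa only [v, if_pos hjk] using hsmall k j hjk x
    · simpa only [v, if_neg hjk] using hC k j x
  have hv : ∀ j, Summable (v j) := fun j => by
    refine summable_geometric_two.congr_cofinite ?_
    rw [Nat.cofinite_eq_atTop]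
    filter_upwards [eventually_gt_atTop j] with k hk using (if_pos hk).symm
  refine ⟨fun x => ∑' k, f k x, contDiff_tsum hf (fun j _ => hv j) fun j k x _ => ?_, fun j => ?_⟩
  · exact norm_iteratedFDeriv_eq_norm_iteratedDeriv.trans_le (hfv j k x)
  · rw [iteratedDeriv_tsum_apply hf (fun j _ => hv j) (fun j k x _ => hfv j k x) le_top]
    simp only [hfc]
    rw [tsum_eq_single j fun k hk => if_neg hk.symm, if_pos rfl]

end Borel

section HalfLine

theorem hasDerivAt_indicator_Ici {f : ℝ → E} {a : ℝ} (hf : DifferentiableOn ℝ f (Ici a))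
    (hfa : f a = 0) (hfa' : derivWithin f (Ici a) a = 0) (x : ℝ) :
    HasDerivAt ((Ici a).indicator f) ((Ici a).indicator (derivWithin f (Ici a)) x) x := by
  have hleft : ∀ x ≤ a, (Ici a).indicator f x = 0 := fun x hx => by
    rcases hx.eq_or_lt with rfl | hx
    · simp [hfa]
    · simp [hx]
  have hderivLeft : ∀ x ≤ a, HasDerivWithinAt ((Ici a).indicator f) 0 (Iic a) x := fun x hx =>
    (hasDerivWithinAt_const x (Iic a) (0 : E)).congr hleft (hleft x hx)
  have hderivRight : ∀ x ∈ Ici a,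
      HasDerivWithinAt ((Ici a).indicator f) (derivWithin f (Ici a) x) (Ici a) x := fun x hx =>
    (hf x hx).hasDerivWithinAt.congr_of_mem (fun y hy => indicator_of_mem hy f) hx
  rcases lt_trichotomy x a with hx | rfl | hx
  · rw [indicator_of_notMem (notMem_Ici.2 hx)]
    exact (hderivLeft x hx.le).hasDerivAt (Iic_mem_nhds hx)
  · rw [indicator_of_mem self_mem_Ici, ← hasDerivWithinAt_univ, ← Iic_union_Ici (a := x)]
    exact (hfa' ▸ hderivLeft x le_rfl).union (hderivRight x self_mem_Ici)
  · rw [indicator_of_mem (mem_Ici.2 hx.le)]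
    exact (hderivRight x hx.le).hasDerivAt (Ici_mem_nhds hx)

theorem contDiff_indicator_Ici {n : ℕ} {f : ℝ → E} {a : ℝ} (hf : ContDiffOn ℝ n f (Ici a))
    (hfa : ∀ k ≤ n, iteratedDerivWithin k f (Ici a) a = 0) :
    ContDiff ℝ n ((Ici a).indicator f) := by
  induction n generalizing f with
  | zero =>
    refine contDiff_zero.2 (continuous_indicator (fun x hx => ?_) ?_)
    · rw [frontier_Ici, mem_singleton_iff] at hx
      simpa [hx] using hfa 0 le_rfl
    · rw [isClosed_Ici.closure_eq]
      exact hf.continuousOn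
  | succ n ih =>
    obtain ⟨hdiff, -, hf'⟩ :=
      (contDiffOn_succ_iff_derivWithin (n := n) (uniqueDiffOn_Ici a)).1 (mod_cast hf)
    have hderiv := hasDerivAt_indicator_Ici hdiff (by simpa using hfa 0 (by simp))
      (by simpa [iteratedDerivWithin_one] using hfa 1 (by simp))
    refine (contDiff_succ_iff_deriv (n := n)).2
      ⟨fun x => (hderiv x).differentiableAt, by simp, ?_⟩
    rw [funext fun x => (hderiv x).deriv]
    refine ih hf' fun k hk => ?_
    rw [← iteratedDerivWithin_succ']
    exact hfa (k + 1) (Nat.succ_le_succ hk)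

theorem exists_contDiff_eqOn_Ici [CompleteSpace E] {f : ℝ → E} {a : ℝ}
    (hf : ContDiffOn ℝ ∞ f (Ici a)) : ∃ g : ℝ → E, ContDiff ℝ ∞ g ∧ EqOn g f (Ici a) := by
  obtain ⟨b, hb, hbf⟩ :=
    exists_contDiff_iteratedDeriv_eq a fun k => iteratedDerivWithin k f (Ici a) a
  have hflat : ∀ k, iteratedDerivWithin k (f - b) (Ici a) a = 0 := fun k => by
    have hbk : ContDiff ℝ k b := contDiff_infty.1 hb k
    rw [iteratedDerivWithin_sub self_mem_Ici (uniqueDiffOn_Ici a)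
      (contDiffOn_infty.1 hf k a self_mem_Ici) hbk.contDiffWithinAt,
      iteratedDerivWithin_eq_iteratedDeriv (uniqueDiffOn_Ici a) hbk.contDiffAt self_mem_Ici,
      hbf, sub_self]
  have hext : ContDiff ℝ ∞ ((Ici a).indicator (f - b)) := contDiff_infty.2 fun n =>
    contDiff_indicator_Ici (contDiffOn_infty.1 (hf.sub hb.contDiffOn) n) fun k _ => hflat k
  exact ⟨b + (Ici a).indicator (f - b), hb.add hext, fun x hx => by simp [indicator_of_mem hx]⟩

end HalfLine

section Whitney

theorem odd_deriv_of_even {g : ℝ → E} (hg : g.Even) : (deriv g).Odd := fun t => by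
  have h := deriv_comp_neg g t
  rw [funext hg] at h
  rw [h, neg_neg]

theorem dslope_zero_of_odd {f : ℝ → E} (hf : f.Odd) {t : ℝ} (ht : t ≠ 0) :
    dslope f 0 t = t⁻¹ • f t := by
  have : IsAddTorsionFree E := .of_isTorsionFree ℝ E
  rw [dslope_of_ne _ ht, slope_def_module, hf.map_zero, sub_zero, sub_zero]

theorem even_dslope_zero_of_odd {f : ℝ → E} (hf : f.Odd) : (dslope f 0).Even := fun t => by
  rcases eq_or_ne t 0 with rfl | ht
  · rw [neg_zero]
  · rw [dslope_zero_of_odd hf ht, dslope_zero_of_odd hf (neg_ne_zero.2 ht), hf t, inv_neg,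
      neg_smul_neg]

theorem hasDerivAt_comp_sqrt {g : ℝ → E} (he : g.Even) (hg : Differentiable ℝ g) {u : ℝ}
    (hu : 0 < u) :
    HasDerivAt (fun u => g √u) ((2⁻¹ : ℝ) • dslope (deriv g) 0 √u) u := by
  refine ((hg √u).hasDerivAt.scomp u (Real.hasDerivAt_sqrt hu.ne')).congr_deriv ?_
  rw [dslope_zero_of_odd (odd_deriv_of_even he) (Real.sqrt_pos.2 hu).ne', smul_smul, one_div,
    mul_inv]

theorem hasDerivWithinAt_comp_sqrt {g : ℝ → E} (he : g.Even) (hg : ContDiff ℝ 2 g) {u : ℝ}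
    (hu : 0 ≤ u) :
    HasDerivWithinAt (fun u => g √u) ((2⁻¹ : ℝ) • dslope (deriv g) 0 √u) (Ici 0) u := by
  have hderiv : ∀ u > 0, HasDerivAt (fun u => g √u) ((2⁻¹ : ℝ) • dslope (deriv g) 0 √u) u :=
    fun u => hasDerivAt_comp_sqrt he (hg.differentiable two_ne_zero)
  rcases hu.eq_or_lt with rfl | hu
  · have hg' : ContDiff ℝ 1 (deriv g) := ((contDiff_succ_iff_deriv (n := 1)).1 hg).2.2
    have hslope : Continuous (dslope (deriv g) 0) := continuousOn_univ.1 <|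
      (continuousOn_dslope univ_mem).2
        ⟨hg'.continuous.continuousOn, hg'.differentiable one_ne_zero 0⟩
    have hcont : Continuous fun u => (2⁻¹ : ℝ) • dslope (deriv g) 0 √u := by fun_prop
    refine hasDerivWithinAt_Ici_of_tendsto_deriv (s := Ioi 0)
      (fun u hu => (hderiv u hu).differentiableAt.differentiableWithinAt)
      (hg.continuous.comp Real.continuous_sqrt).continuousWithinAt self_mem_nhdsWithin
      (((hcont.tendsto 0).mono_left nhdsWithin_le_nhds).congr' ?_)
    filter_upwards [self_mem_nhdsWithin] with u hu using (hderiv u hu).deriv.symm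
  · exact (hderiv u hu).hasDerivWithinAt

theorem contDiffOn_comp_sqrt [CompleteSpace E] {n : ℕ} {g : ℝ → E} (he : g.Even)
    (hg : ContDiff ℝ (2 * n : ℕ) g) : ContDiffOn ℝ n (fun u => g √u) (Ici 0) := by
  induction n generalizing g with
  | zero => exact contDiffOn_zero.2 (hg.continuous.comp Real.continuous_sqrt).continuousOn
  | succ n ih =>
    have hderiv : ∀ u ∈ Ici (0 : ℝ),
        HasDerivWithinAt (fun u => g √u) ((2⁻¹ : ℝ) • dslope (deriv g) 0 √u) (Ici 0) u :=
      fun u => hasDerivWithinAt_comp_sqrt he (hg.of_le (mod_cast by lia))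
    have hslope : ContDiff ℝ (2 * n : ℕ) (dslope (deriv g) 0) :=
      contDiff_dslope ((contDiff_succ_iff_deriv (n := (2 * n : ℕ) + 1)).1 (mod_cast hg)).2.2 0
    refine (contDiffOn_succ_iff_derivWithin (n := n) (uniqueDiffOn_Ici 0)).2
      ⟨fun u hu => (hderiv u hu).differentiableWithinAt, by simp, ?_⟩
    refine ((ih (even_dslope_zero_of_odd (odd_deriv_of_even he)) hslope).const_smul
      (2⁻¹ : ℝ)).congr fun u hu => ?_
    exact (hderiv u hu).derivWithin (uniqueDiffOn_Ici 0 u hu)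

theorem exists_contDiff_comp_sq_of_even [CompleteSpace E] {g : ℝ → E} (he : g.Even)
    (hg : ContDiff ℝ ∞ g) : ∃ ψ : ℝ → E, ContDiff ℝ ∞ ψ ∧ ∀ t, g t = ψ (t ^ 2) := by
  have hsqrt : ContDiffOn ℝ ∞ (fun u => g √u) (Ici 0) := contDiffOn_infty.2 fun n =>
    contDiffOn_comp_sqrt he (contDiff_infty.1 hg (2 * n))
  obtain ⟨ψ, hψ, hψg⟩ := exists_contDiff_eqOn_Ici hsqrt
  refine ⟨ψ, hψ, fun t => ?_⟩
  rw [hψg (sq_nonneg t)]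
  simp only [Real.sqrt_sq_eq_abs]
  rcases abs_choice t with h | h <;> simp only [h, he t]

end Whitney

section Radial

variable {α : ℝ → ℝ}

theorem exists_contDiff_comp_sq_of_contDiff_abs_mul (h : ContDiff ℝ ∞ fun t : ℝ => α |t| * t) :
    ∃ ψ : ℝ → ℝ, ContDiff ℝ ∞ ψ ∧ ∀ s > 0, α s = ψ (s ^ 2) := by
  have hodd : Function.Odd fun t : ℝ => α |t| * t := fun t => by simp
  obtain ⟨ψ, hψ, hψα⟩ := exists_contDiff_comp_sq_of_even (even_dslope_zero_of_odd hodd)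
    (contDiff_infty.2 fun n => contDiff_dslope (contDiff_infty.1 h (n + 1)) 0)
  refine ⟨ψ, hψ, fun s hs => ?_⟩
  rw [← hψα, dslope_zero_of_odd hodd hs.ne', abs_of_pos hs, smul_eq_mul, mul_comm,
    mul_inv_cancel_right₀ hs.ne']

theorem contDiff_abs_mul_of_contDiff_norm_smul {n : WithTop ℕ∞} {L : E →L[ℝ] F}
    (hL : L ≠ 0) (h : ContDiff ℝ n fun x => α ‖x‖ • L x) :
    ContDiff ℝ n fun t : ℝ => α |t| * t := by
  obtain ⟨x, hx⟩ : ∃ x, L x ≠ 0 := by simpa using DFunLike.ne_iff.1 hL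
  have hx0 : ‖x‖ ≠ 0 := norm_ne_zero_iff.2 fun h0 => hx (by rw [h0, map_zero])
  let e : E := ‖x‖⁻¹ • x
  have he : ‖e‖ = 1 := by simp [e, norm_smul, hx0]
  obtain ⟨ℓ, hℓ⟩ : ∃ ℓ : StrongDual ℝ F, ℓ (L e) = 1 :=
    SeparatingDual.exists_eq_one (by simp [e, hx, norm_ne_zero_iff.1 hx0])
  have hline : ContDiff ℝ n fun t : ℝ => t • e := contDiff_id.smul contDiff_const
  convert ℓ.contDiff.comp (h.comp hline) using 1
  funext t
  simp [norm_smul, he, hℓ]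

theorem contDiff_norm_smul_of_comp_sq {V : Type*} [NormedAddCommGroup V] [InnerProductSpace ℝ V]
    {n : WithTop ℕ∞} {ψ : ℝ → ℝ} (hψ : ContDiff ℝ n ψ) (hαψ : ∀ s > 0, α s = ψ (s ^ 2))
    (L : V →L[ℝ] F) : ContDiff ℝ n fun x => α ‖x‖ • L x := by
  convert (hψ.comp (contDiff_norm_sq ℝ)).smul L.contDiff using 1
  funext x
  rcases eq_or_ne x 0 with rfl | hx
  · simp
  · simp [hαψ _ (norm_pos_iff.2 hx)]

theorem exists_hasCompactSupport_comp_sq {n : ℕ∞} {ψ : ℝ → ℝ} (hψ : ContDiff ℝ n ψ)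
    (hα : BddSupp α) (hαψ : ∀ s > 0, α s = ψ (s ^ 2)) :
    ∃ φ : ℝ → ℝ, ContDiff ℝ n φ ∧ HasCompactSupport φ ∧ ∀ s > 0, α s = φ (s ^ 2) := by
  obtain ⟨R, hR⟩ := hα
  let χ : ContDiffBump (0 : ℝ) := ⟨R ^ 2 + 1, R ^ 2 + 2, by positivity, by linarith⟩
  refine ⟨fun u => χ u * ψ u, χ.contDiff.mul hψ, χ.hasCompactSupport.mul_right, fun s hs => ?_⟩
  rcases le_total R s with hRs | hsR
  · simp [← hαψ s hs, hR s hRs]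
  · have hsq : s ^ 2 ≤ R ^ 2 := by gcongr
    have hχ : χ (s ^ 2) = 1 := χ.one_of_mem_closedBall <| by
      rw [mem_closedBall_zero_iff, Real.norm_of_nonneg (sq_nonneg s)]
      exact hsq.trans (le_add_of_nonneg_right zero_le_one)
    simp only [hχ, one_mul, hαψ s hs]

end Radial

theorem stmt13_general {V : Type*} [NormedAddCommGroup V] [InnerProductSpace ℝ V] {L : V →L[ℝ] F}
    (hL : L ≠ 0) {α : ℝ → ℝ} (hα : BddSupp α) :
    ContDiff ℝ ∞ (fun x => α ‖x‖ • L x) ↔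
      ∃ ψ : ℝ → ℝ, ContDiff ℝ ∞ ψ ∧ HasCompactSupport ψ ∧ ∀ s > 0, α s = ψ (s ^ 2) := by
  constructor
  · intro h
    obtain ⟨ψ, hψ, hαψ⟩ := exists_contDiff_comp_sq_of_contDiff_abs_mul
      (contDiff_abs_mul_of_contDiff_norm_smul hL h)
    exact exists_hasCompactSupport_comp_sq hψ hα hαψ
  · rintro ⟨ψ, hψ, -, hαψ⟩
    exact contDiff_norm_smul_of_comp_sq hψ hαψ L

/-- For `α ∈ T_n^n`, the map `x ↦ α(|x|) xᵢ` (which equals `0` at `x = 0`) is smooth on `ℝⁿ`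
if and only if `α(s) = ψ(s²)` for some smooth, compactly supported `ψ`. -/
theorem stmt13 (n : ℕ) (hn : 1 ≤ n) (i : Fin n) (α : ℝ → ℝ) (hα : MemT n n α) :
    ContDiff ℝ (⊤ : ℕ∞) (fun x : EuclideanSpace ℝ (Fin n) => α ‖x‖ * x i) ↔
      ∃ ψ : ℝ → ℝ, ContDiff ℝ (⊤ : ℕ∞) ψ ∧ HasCompactSupport ψ ∧ ∀ s > (0:ℝ), α s = ψ (s ^ 2) := by
  have hproj : EuclideanSpace.proj (𝕜 := ℝ) i ≠ 0 := fun h => by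
    simpa using DFunLike.congr_fun h (EuclideanSpace.single i 1)
  exact stmt13_general hproj hα.2.1
end
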